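/- arXiv:2105.14508 — 3 statements merged into one kernel-verified Lean document; each statement's English description precedes it below -/
import Mathlib

section
/- Let q be a prime power, let V be a set of points of the projective space PG(r,q) over GF(q) that spans PG(r,q), and let C(V) be an associated projective code. Then C(V) is a minimal code if and only if for every hyperplane Σ of PG(r,q) the points of Σ ∩ V span Σ. -/
/-- The codeword of the projective code associated to the projective system `V`
corresponding to the linear functional `f`: its coordinates are the evaluations
of `f` at the (fixed) representative vectors of the points of `V`. -/
noncomputable def cw {F W : Type*} [Field F] [AddCommGroup W] [Module F W]
    (V : Set (Projectivization F W)) (f : Module.Dual F W) : ↥V → F :=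
  fun P => f P.1.rep

/-- A nonzero codeword is minimal if every nonzero codeword whose support is contained
in its support is a scalar multiple of it. -/
def IsMinimalWord {F W : Type*} [Field F] [AddCommGroup W] [Module F W]
    (V : Set (Projectivization F W)) (f : Module.Dual F W) : Prop :=
  cw V f ≠ 0 ∧ ∀ g : Module.Dual F W, cw V g ≠ 0 →
    (∀ P : ↥V, cw V g P ≠ 0 → cw V f P ≠ 0) → ∃ a : F, cw V g = a • cw V f

/-- The projective code of `V` is a minimal code if all of its nonzero codewords
are minimal. -/
def IsMinimalCode {F W : Type*} [Field F] [AddCommGroup W] [Module F W]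
    (V : Set (Projectivization F W)) : Prop :=
  ∀ f : Module.Dual F W, cw V f ≠ 0 → IsMinimalWord V f

/-- for a spanning set of points `V` of `PG(r,q)`, the projective code
`C(V)` is minimal iff for every hyperplane `Σ` (the zero locus of a nonzero functional
`f`) the points of `Σ ∩ V` span `Σ`. -/
theorem statement0 (q r : ℕ) (hq : IsPrimePow q)
    (F : Type) [Field F] [Fintype F] (hF : Fintype.card F = q)
    (V : Set (Projectivization F (Fin (r + 1) → F)))
    (hV : Submodule.span F (Projectivization.rep '' V) = ⊤) :
    IsMinimalCode V ↔
      ∀ f : Module.Dual F (Fin (r + 1) → F), f ≠ 0 →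
        Submodule.span F (Projectivization.rep '' ({P | f P.rep = 0} ∩ V)) =
          LinearMap.ker f := by
  have key : ∀ g h : Module.Dual F (Fin (r + 1) → F), cw V g = cw V h → g = h := by
    intro g h hgh
    apply LinearMap.ext_on hV
    rintro _ ⟨P, hP, rfl⟩
    exact congrFun hgh ⟨P, hP⟩
  have cw0 : cw V (0 : Module.Dual F (Fin (r + 1) → F)) = 0 := by
    funext P
    simp [cw]
  have hne : ∀ g : Module.Dual F (Fin (r + 1) → F), g ≠ 0 → cw V g ≠ 0 := by
    intro g hg h
    exact hg (key g 0 (h.trans cw0.symm))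
  constructor
  · intro hm f hf
    apply le_antisymm
    · rw [Submodule.span_le]
      rintro _ ⟨P, ⟨hP, -⟩, rfl⟩
      exact hP
    · intro x hx
      by_contra hxS
      obtain ⟨g, hgx, hg⟩ := Submodule.exists_le_ker_of_notMem hxS
      have hg0 : g ≠ 0 := by
        rintro rfl
        exact hgx rfl
      obtain ⟨a, ha⟩ := (hm f (hne f hf)).2 g (hne g hg0) (by
        intro P hgP hfP
        exact hgP (hg (Submodule.subset_span ⟨P.1, ⟨hfP, P.2⟩, rfl⟩)))
      have hga : g = a • f := key _ _ (ha.trans (by funext P; simp [cw]))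
      apply hgx
      have hfx : f x = 0 := hx
      simp [hga, hfx]
  · intro hs f hf
    refine ⟨hf, fun g _ hsub => ?_⟩
    have hf0 : f ≠ 0 := by
      rintro rfl
      exact hf cw0
    have hker : LinearMap.ker f ≤ LinearMap.ker g := by
      rw [← hs f hf0, Submodule.span_le]
      rintro _ ⟨P, ⟨hP, hPV⟩, rfl⟩
      by_contra hgP
      exact hsub ⟨P, hPV⟩ hgP hP
    obtain ⟨v, hv⟩ : ∃ v, f v ≠ 0 := by
      by_contra! h
      exact hf0 (LinearMap.ext h)
    refine ⟨g v / f v, ?_⟩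
    funext P
    have h1 : P.1.rep - (f P.1.rep / f v) • v ∈ LinearMap.ker f := by
      simp [hv]
    have h2 := hker h1
    simp only [LinearMap.mem_ker, map_sub, map_smul, smul_eq_mul, sub_eq_zero] at h2
    simp only [cw, Pi.smul_apply, smul_eq_mul]
    rw [h2]
    ring
end

section
/- Let q be an odd prime power and r ≥ 3 odd, and let B be the hypersurface of PG(r,q²) defined below with 4α^{q+1}+(β^q−β)² ≠ 0. Then |B| = q^{2r−1}+q^{r−1}+(q^{2(r−1)}−q²)/(q²−1)+1, and for every hyperplane Σ of PG(r,q²) the cardinality |B ∩ Σ| belongs to the set {n₁, n₂, n₃, n₄, n₅}, where n₁ = q²(q^{2(r−2)}−1)/(q²−1)+q^{r−1}+1, n₂ = q^{2r−3}−q^{r−2}+q^{r−3}+(q^{2(r−2)}−1)/(q²−1), n₃ = q^{2r−3}+(q^{2(r−2)}−q²)/(q²−1)+1, n₄ = q^{2r−3}+q^{r−1}−q^{r−2}+q^{r−3}+(q^{2(r−2)}−1)/(q²−1), and n₅ = q^{2r−3}+q^{r−1}+(q^{2(r−2)}−q²)/(q²−1)+1. -/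
/-- The affine equation
`x_r^q − x_r + α^q(x₁^{2q}+⋯+x_{r−1}^{2q}) − α(x₁²+⋯+x_{r−1}²)
  = (β^q−β)(x₁^{q+1}+⋯+x_{r−1}^{q+1})`. -/
def affEq {F : Type*} [Field F] (q r : ℕ) (α β : F) (x : Fin (r + 1) → F) : Prop :=
  x (Fin.last r) ^ q - x (Fin.last r)
      + α ^ q * (∑ i : Fin (r + 1), if 1 ≤ i.1 ∧ i.1 < r then x i ^ (2 * q) else 0)
      - α * (∑ i : Fin (r + 1), if 1 ≤ i.1 ∧ i.1 < r then x i ^ 2 else 0)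
    = (β ^ q - β) * (∑ i : Fin (r + 1), if 1 ≤ i.1 ∧ i.1 < r then x i ^ (q + 1) else 0)

/-- The hypersurface `B` of `PG(r,q²)`: the affine points (X₀ ≠ 0) whose affine
coordinates satisfy `affEq`, together with the points at infinity (X₀ = 0)
satisfying `X₁² + ⋯ + X_{r−1}² = 0`. -/
noncomputable def Bset (F : Type*) [Field F] (q r : ℕ) (α β : F) :
    Set (Projectivization F (Fin (r + 1) → F)) :=
  {P | (P.rep 0 ≠ 0 ∧ affEq q r α β fun i => P.rep i / P.rep 0) ∨
       (P.rep 0 = 0 ∧ (∑ i : Fin (r + 1), if 1 ≤ i.1 ∧ i.1 < r then P.rep i ^ 2 else 0) = 0)}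


theorem gauss_sq {F : Type} [Field F] [Fintype F] (e : AddChar F ℂ) (he : e ≠ 1) (g : F → ℂ)
    (M : F → F) (hM : ∀ z, M z = 0 → z = 0) (hg0 : g 0 = 1)
    (hg : ∀ x y, g (x + y) = g x * g y * e (M x * y))
    (L : F → F) (hLb : Function.Bijective L) (hL : ∀ x, g (L x) * g x = 1) :
    (∑ x, g x) ^ 2 = (Fintype.card F : ℂ) := by
  classical
  have h1 : ∑ x, g x = ∑ x, g (L x) := (hLb.sum_comp g).symm
  have h2 : (∑ x, g x) ^ 2 = ∑ z, ∑ y, g (z + y) * g (L y) := by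
    rw [sq]; nth_rw 2 [h1]
    rw [Finset.mul_sum, Finset.sum_comm (f := fun z y => g (z + y) * g (L y))]
    refine Finset.sum_congr rfl fun y _ => ?_
    rw [Finset.sum_mul]
    exact (Equiv.sum_comp (Equiv.addRight y) (fun z => g z * g (L y))).symm
  have hprim := AddChar.IsPrimitive.of_ne_one he
  have h3 : ∀ z, ∑ y, g (z + y) * g (L y) = if z = 0 then (Fintype.card F : ℂ) else 0 := by
    intro z
    have : ∀ y, g (z + y) * g (L y) = g z * e (y * M z) := by
      intro y
      rw [hg, mul_comm y]
      linear_combination g z * e (M z * y) * hL y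
    simp_rw [this]
    rw [← Finset.mul_sum, AddChar.sum_mulShift _ hprim]
    by_cases hz : z = 0
    · subst hz
      have hM0 : M 0 = 0 := by
        by_contra h
        have h5 : ∀ y, e (M 0 * y) = 1 := by
          intro y
          have := hg 0 y
          have h6 := hL y
          rw [zero_add, hg0, one_mul] at this
          have hne : g y ≠ 0 := right_ne_zero_of_mul_eq_one h6
          exact mul_left_cancel₀ hne (by rw [← this, mul_one])
        apply hprim h
        ext y
        simpa [AddChar.mulShift_apply] using h5 y
      simp [hM0, hg0]
    · simp [hz, mt (hM z) hz]
  rw [h2]; simp_rw [h3]; simp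

theorem gauss_prod {F : Type} [Field F] [Fintype F] (e : AddChar F ℂ) (he : e ≠ 1) (g : F → ℂ)
    (M : F → F) (hM : ∀ z, M z = 0 → z = 0) (hg0 : g 0 = 1)
    (hg : ∀ x y, g (x + y) = g x * g y * e (M x * y))
    (L : F → F) (hLb : Function.Bijective L) (hL : ∀ x, g (L x) * g x = 1) (m : ℕ)
    (a y : Fin (2 * m) → F) (hy : ∀ i, M (y i) = a i) :
    (∑ x : Fin (2 * m) → F, ∏ i, (g (x i) * e (a i * x i))) * ∏ i, g (y i)
      = (Fintype.card F : ℂ) ^ m := by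
  classical
  have h := Finset.prod_univ_sum (fun _ : Fin (2 * m) => (Finset.univ : Finset F))
    (fun i x => g x * e (a i * x))
  rw [Fintype.piFinset_univ] at h
  rw [← h, ← Finset.prod_mul_distrib]
  have h2 : ∀ i, (∑ x, g x * e (a i * x)) * g (y i) = ∑ x, g x := by
    intro i
    rw [Finset.sum_mul, ← Equiv.sum_comp (Equiv.addLeft (y i)) g]
    refine Finset.sum_congr rfl fun x _ => ?_
    simp only [Equiv.coe_addLeft]
    rw [hg, hy]; ring
  simp_rw [h2]
  rw [Finset.prod_const, Finset.card_univ, Fintype.card_fin, pow_mul,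
    gauss_sq e he g M hM hg0 hg L hLb hL]

-- counting zero via characters
theorem count_char {F X : Type} [Field F] [Fintype F] [Fintype X] (ψ : AddChar F ℂ)
    (hψ : ψ.IsPrimitive) (h : X → F) :
    (Fintype.card F : ℂ) * (Nat.card {x // h x = 0} : ℂ) = ∑ s, ∑ x, ψ (s * h x) := by
  classical
  rw [Finset.sum_comm]
  simp_rw [AddChar.sum_mulShift _ hψ]
  simp only [Nat.card_eq_fintype_card, Fintype.card_subtype]
  push_cast
  rw [← Finset.sum_filter, Finset.sum_const, nsmul_eq_mul]
  ring

theorem count_char2 {F X : Type} [Field F] [Fintype F] [Fintype X] (ψ : AddChar F ℂ)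
    (hψ : ψ.IsPrimitive) (h k : X → F) :
    (Fintype.card F : ℂ) ^ 2 * (Nat.card {x // h x = 0 ∧ k x = 0} : ℂ)
      = ∑ s, ∑ t, ∑ x, ψ (s * h x + t * k x) := by
  classical
  have h1 : ∀ s, ∑ t, ∑ x, ψ (s * h x + t * k x)
      = ∑ x, ψ (s * h x) * (if k x = 0 then (Fintype.card F : ℂ) else 0) := by
    intro s
    rw [Finset.sum_comm]
    refine Finset.sum_congr rfl fun x _ => ?_
    simp_rw [AddChar.map_add_eq_mul]
    rw [← Finset.mul_sum, AddChar.sum_mulShift _ hψ]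
    push_cast; rfl
  simp_rw [h1]
  rw [Finset.sum_comm]
  simp_rw [← Finset.sum_mul, AddChar.sum_mulShift _ hψ]
  simp only [Nat.card_eq_fintype_card, Fintype.card_subtype]
  push_cast
  have h5 : ∀ x, ((if h x = 0 then (Fintype.card F : ℂ) else 0) *
      (if k x = 0 then (Fintype.card F : ℂ) else 0))
      = if (h x = 0 ∧ k x = 0) then (Fintype.card F : ℂ) ^ 2 else 0 := by
    intro x
    by_cases h6 : h x = 0 <;> by_cases h7 : k x = 0 <;> simp [h6, h7, sq]
  simp_rw [h5]
  rw [← Finset.sum_filter, Finset.sum_const, nsmul_eq_mul]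
  ring

theorem addChar_sum {F ι : Type} [Field F] (e : AddChar F ℂ) (s : Finset ι) (f : ι → F) :
    e (∑ i ∈ s, f i) = ∏ i ∈ s, e (f i) := by
  classical
  induction s using Finset.induction_on with
  | empty => simp
  | insert a s ha ih => rw [Finset.sum_insert ha, Finset.prod_insert ha, AddChar.map_add_eq_mul, ih]

theorem quad_sum {F : Type} [Field F] [Fintype F] (ψ : AddChar F ℂ)
    (hψ : ψ.IsPrimitive) (h2 : (2 : F) ≠ 0) (I : F) (hI : I * I = -1) (s : F) (hs : s ≠ 0) (m : ℕ)
    (b : Fin (2 * m) → F) :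
    ∑ x : Fin (2 * m) → F, ψ (s * ∑ i, x i ^ 2 + ∑ i, b i * x i)
      = (Fintype.card F : ℂ) ^ m * ψ (- (∑ i, b i ^ 2) / 4 * s⁻¹) := by
  have h1 : ψ ≠ 1 := by
    have := hψ (one_ne_zero)
    simpa using this
  have hI0 : I ≠ 0 := by
    rintro rfl; simp at hI
  have key := gauss_prod ψ h1 (fun x => ψ (s * x ^ 2)) (fun x => 2 * s * x)
    (by intro z hz; simpa [h2, hs] using hz) (by simp)
    (by intro x y; rw [← AddChar.map_add_eq_mul, ← AddChar.map_add_eq_mul]; congr 1; ring)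
    (fun x => I * x) (mulLeft_bijective₀ I hI0)
    (by
      intro x
      rw [← AddChar.map_add_eq_mul, ← AddChar.map_zero_eq_one ψ]; congr 1
      linear_combination s * x ^ 2 * hI) m b (fun i => b i / (2 * s))
    (by intro i; field_simp)
  have e1 : ∀ x : Fin (2 * m) → F, ψ (s * ∑ i, x i ^ 2 + ∑ i, b i * x i)
      = ∏ i, (ψ (s * x i ^ 2) * ψ (b i * x i)) := by
    intro x
    rw [Finset.prod_mul_distrib, ← addChar_sum, ← addChar_sum, ← AddChar.map_add_eq_mul,
      Finset.mul_sum]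
  simp_rw [e1]
  rw [← addChar_sum] at key
  rw [← key, mul_assoc, ← AddChar.map_add_eq_mul]
  have h4 : (4 : F) ≠ 0 := by
    have : (4 : F) = 2 * 2 := by norm_num
    rw [this]; exact mul_ne_zero h2 h2
  have : (∑ i, s * (b i / (2 * s)) ^ 2 + -(∑ i, b i ^ 2) / 4 * s⁻¹) = 0 := by
    rw [neg_div, neg_mul, ← sub_eq_add_neg, sub_eq_zero, Finset.sum_div, Finset.sum_mul]
    refine Finset.sum_congr rfl fun i _ => ?_
    field_simp
    ring
  rw [this]; simp

theorem cnt_one {F : Type} [Field F] [Fintype F] (ψ : AddChar F ℂ)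
    (hψ : ψ.IsPrimitive) (h2 : (2 : F) ≠ 0) (I : F) (hI : I * I = -1) (m : ℕ) :
    (Fintype.card F : ℂ) * (Nat.card {x : Fin (2 * m) → F // ∑ i, x i ^ 2 = 0} : ℂ)
      = (Fintype.card F : ℂ) ^ (2 * m) + ((Fintype.card F : ℂ) - 1) * (Fintype.card F : ℂ) ^ m := by
  classical
  rw [count_char ψ hψ, ← Finset.add_sum_erase _ _ (Finset.mem_univ (0 : F))]
  congr 1
  · simp
  · rw [Finset.sum_congr rfl (g := fun _ => (Fintype.card F : ℂ) ^ m)]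
    · rw [Finset.sum_const, Finset.card_erase_of_mem (Finset.mem_univ _), Finset.card_univ,
        nsmul_eq_mul, Nat.cast_sub Fintype.card_pos]
      simp
    · intro s hs
      have := quad_sum ψ hψ h2 I hI s (Finset.ne_of_mem_erase hs) m 0
      simpa using this

theorem lin_sum {F : Type} [Field F] [DecidableEq F] [Fintype F] (ψ : AddChar F ℂ)
    (hψ : ψ.IsPrimitive) (n : ℕ) (a : Fin n → F) (ha : a ≠ 0) (t : F) :
    ∑ x : Fin n → F, ψ (t * ∑ i, a i * x i)
      = if t = 0 then (Fintype.card F : ℂ) ^ n else 0 := by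
  classical
  split_ifs with ht
  · simp [ht]
  · obtain ⟨j, hj⟩ := Function.ne_iff.mp ha
    have h := Finset.prod_univ_sum (fun _ : Fin n => (Finset.univ : Finset F))
      (fun i x => ψ (x * (t * a i)))
    rw [Fintype.piFinset_univ] at h
    have e1 : ∀ x : Fin n → F, ψ (t * ∑ i, a i * x i) = ∏ i, ψ (x i * (t * a i)) := by
      intro x
      rw [← addChar_sum, Finset.mul_sum]
      congr 1
      exact Finset.sum_congr rfl fun i _ => by ring
    simp_rw [e1]
    rw [← h]
    apply Finset.prod_eq_zero (Finset.mem_univ j)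
    rw [AddChar.sum_mulShift _ hψ]
    have hj' : a j ≠ 0 := hj
    simp [ht, hj']

theorem cnt_lin {F : Type} [Field F] [Fintype F] (ψ : AddChar F ℂ)
    (hψ : ψ.IsPrimitive) (n : ℕ) (a : Fin n → F) (ha : a ≠ 0) (c : F) :
    (Fintype.card F : ℂ) * (Nat.card {x : Fin n → F // c + ∑ i, a i * x i = 0} : ℂ)
      = (Fintype.card F : ℂ) ^ n := by
  classical
  rw [count_char ψ hψ]
  simp_rw [mul_add, AddChar.map_add_eq_mul, ← Finset.mul_sum, lin_sum ψ hψ n a ha]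
  simp

theorem cnt_two {F : Type} [Field F] [Fintype F] (ψ : AddChar F ℂ)
    (hψ : ψ.IsPrimitive) (h2 : (2 : F) ≠ 0) (I : F) (hI : I * I = -1) (m : ℕ)
    (a : Fin (2 * m) → F) (ha : a ≠ 0) (d : Prop) [Decidable d] (hd : d ↔ ∑ i, a i ^ 2 = 0) :
    (Fintype.card F : ℂ) ^ 2 *
      (Nat.card {x : Fin (2 * m) → F // ∑ i, x i ^ 2 = 0 ∧ ∑ i, a i * x i = 0} : ℂ)
      = (Fintype.card F : ℂ) ^ (2 * m) + if d then
        ((Fintype.card F : ℂ) - 1) * (Fintype.card F : ℂ) ^ (m + 1) else 0 := by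
  classical
  rw [count_char2 ψ hψ, ← Finset.add_sum_erase _ _ (Finset.mem_univ (0 : F))]
  congr 1
  · simp_rw [zero_mul, zero_add, lin_sum ψ hψ _ a ha]
    simp
  · have h4 : (4 : F) ≠ 0 := by
      have : (4 : F) = 2 * 2 := by norm_num
      rw [this]; exact mul_ne_zero h2 h2
    rw [Finset.sum_congr rfl (g := fun s => ∑ t, (Fintype.card F : ℂ) ^ m *
        ψ (s⁻¹ * (-(t ^ 2 * ∑ i, a i ^ 2) / 4)))]
    · rw [Finset.sum_erase_eq_sub (Finset.mem_univ _), Finset.sum_comm]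
      simp_rw [← Finset.mul_sum]
      have h3 : ∀ w : F, ∑ s : F, ψ (s⁻¹ * w) = ∑ s : F, ψ (s * w) := fun w =>
        Equiv.sum_comp (Function.Involutive.toPerm _ (inv_involutive (G := F))) (fun s => ψ (s * w))
      simp_rw [h3, AddChar.sum_mulShift _ hψ]
      split_ifs with hdd
      · rw [hd] at hdd
        simp [hdd]; ring
      · rw [hd] at hdd
        have : ∀ t : F, (-(t ^ 2 * ∑ i, a i ^ 2) / 4 = 0) ↔ t = 0 := by
          intro t
          simp [h4, hdd]
        simp_rw [this]
        simp
    · intro s hs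
      refine Finset.sum_congr rfl fun t _ => ?_
      have := quad_sum ψ hψ h2 I hI s (Finset.ne_of_mem_erase hs) m (fun i => t * a i)
      simp_rw [mul_pow, mul_assoc, ← Finset.mul_sum] at this
      rw [this]; congr 2; ring

theorem herm_sum {F : Type} [Field F] [Fintype F] (σ : F →+* F) (hσ : ∀ x, σ (σ x) = x)
    (α β : F) (hΔ : 4 * (α * σ α) + (σ β - β) ^ 2 ≠ 0)
    (p s : F) (hp : σ p = p) (hs : σ s = s)
    (hps : p ^ 2 - s ^ 2 * (4 * (α * σ α) + (σ β - β) ^ 2) = -1)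
    (e : AddChar F ℂ) (he1 : e ≠ 1) (he : ∀ z, σ z = z → e z = 1) (m : ℕ)
    (a y : Fin (2 * m) → F) (hy : ∀ i, 2 * α * y i + (σ β - β) * σ (y i) = a i) :
    ∑ x : Fin (2 * m) → F, e (∑ i, a i * x i + α * ∑ i, x i ^ 2 - β * ∑ i, x i * σ (x i))
      = (Fintype.card F : ℂ) ^ m * e (-(α * ∑ i, y i ^ 2 - β * ∑ i, y i * σ (y i))) := by
  have heq : ∀ z w, σ (z - w) = z - w → e z = e w := by
    intro z w h
    have := he _ h
    rw [← sub_add_cancel z w, AddChar.map_add_eq_mul, this, one_mul]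
  have hm2 : σ 2 = 2 := map_ofNat σ 2
  have key := gauss_prod e he1 (fun x => e (α * x ^ 2 - β * (x * σ x)))
    (fun x => 2 * α * x + (σ β - β) * σ x)
    (by
      intro z hz
      have hz2 : 2 * σ α * σ z - (σ β - β) * z = 0 := by
        have := congrArg σ hz
        simp only [map_add, map_mul, map_sub, hσ, map_zero, hm2] at this
        linear_combination this
      have : (4 * (α * σ α) + (σ β - β) ^ 2) * z = 0 := by
        linear_combination 2 * σ α * hz - (σ β - β) * hz2
      exact (mul_eq_zero.mp this).resolve_left hΔ) (by simp)
    (by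
      intro x y
      rw [← AddChar.map_add_eq_mul, ← AddChar.map_add_eq_mul]
      apply heq
      simp only [map_add, map_mul, map_sub, map_pow, hσ, hm2]
      ring)
    (fun x => p * x + s * (2 * σ α * σ x - (σ β - β) * x))
    (by
      rw [← Finite.injective_iff_bijective]
      have inv : ∀ x, -(p * (p * x + s * (2 * σ α * σ x - (σ β - β) * x)) -
          s * (2 * σ α * σ (p * x + s * (2 * σ α * σ x - (σ β - β) * x)) -
            (σ β - β) * (p * x + s * (2 * σ α * σ x - (σ β - β) * x)))) = x := by
        intro x
        simp only [map_add, map_mul, map_sub, hσ, hm2, hp, hs]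
        linear_combination (-x) * hps
      intro x x' hxx
      dsimp only at hxx
      rw [← inv x, ← inv x', hxx])
    (by
      intro x
      rw [← AddChar.map_add_eq_mul]
      apply he
      simp only [map_add, map_mul, map_sub, map_pow, hσ, hm2, hp, hs]
      linear_combination (σ α * σ x ^ 2 - α * x ^ 2 - (σ β - β) * (x * σ x)) * hps) m a y hy
  have e1 : ∀ x : Fin (2 * m) → F,
      e (∑ i, a i * x i + α * ∑ i, x i ^ 2 - β * ∑ i, x i * σ (x i))
      = ∏ i, (e (α * x i ^ 2 - β * (x i * σ (x i))) * e (a i * x i)) := by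
    intro x
    rw [Finset.prod_mul_distrib, ← addChar_sum, ← addChar_sum, ← AddChar.map_add_eq_mul,
      Finset.mul_sum, Finset.mul_sum, Finset.sum_sub_distrib]
    congr 1; ring
  simp_rw [e1]
  rw [← addChar_sum, Finset.sum_sub_distrib, ← Finset.mul_sum, ← Finset.mul_sum] at key
  rw [← key, mul_assoc, ← AddChar.map_add_eq_mul]
  simp

theorem cnt_three {F : Type} [Field F] [Fintype F] (ψ : AddChar F ℂ)
    (hψ : ψ.IsPrimitive) (σ : F →+* F) (hσ : ∀ x, σ (σ x) = x)
    (α β : F) (hΔ : 4 * (α * σ α) + (σ β - β) ^ 2 ≠ 0)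
    (p s : F) (hp : σ p = p) (hs : σ s = s)
    (hps : p ^ 2 - s ^ 2 * (4 * (α * σ α) + (σ β - β) ^ 2) = -1)
    (k : ℕ) (hk : Nat.card {z : F // σ z - z = 0} = k) (m : ℕ)
    (c : F) (a : Fin (2 * m) → F) :
    ∃ δ : ℂ, (δ = 0 ∨ δ = 1) ∧
    (Fintype.card F : ℂ) * (Nat.card {x : Fin (2 * m) → F //
      σ (c + (∑ i, a i * x i + α * ∑ i, x i ^ 2 - β * ∑ i, x i * σ (x i)))
        - (c + (∑ i, a i * x i + α * ∑ i, x i ^ 2 - β * ∑ i, x i * σ (x i))) = 0} : ℂ)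
      = k * (Fintype.card F : ℂ) ^ (2 * m)
        + (Fintype.card F : ℂ) ^ m * (δ * (Fintype.card F : ℂ) - k) := by
  classical
  have hm2 : σ 2 = 2 := map_ofNat σ 2
  let T : F →+ F := σ.toAddMonoidHom - AddMonoidHom.id F
  have hT : ∀ z, T z = σ z - z := fun z => rfl
  let e : F → AddChar F ℂ := fun s => (ψ.mulShift s).compAddMonoidHom T
  have hev : ∀ s z, e s z = ψ (s * (σ z - z)) := fun s z => rfl
  have hsum : ∀ s, ∑ z, e s z = if e s = 1 then (Fintype.card F : ℂ) else 0 := by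
    intro s
    split_ifs with h
    · rw [AddChar.sum_eq_card_of_eq_one h]
    · rw [AddChar.sum_eq_zero_of_ne_one h]
  have hQ : (Fintype.card F : ℂ) ≠ 0 := by
    exact_mod_cast Fintype.card_ne_zero
  have hcard : ((Finset.univ.filter fun s => e s = 1).card : ℂ) = k := by
    have h := count_char ψ hψ (fun z => σ z - z)
    simp_rw [← hev, hsum] at h
    rw [← Finset.sum_filter, Finset.sum_const, nsmul_eq_mul, hk] at h
    exact mul_left_cancel₀ hQ (by rw [h]; ring)
  -- surjectivity
  have hsurj : Function.Surjective fun y => 2 * α * y + (σ β - β) * σ y := by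
    apply Finite.surjective_of_injective
    intro y y' h
    have hz : 2 * α * (y - y') + (σ β - β) * σ (y - y') = 0 := by
      dsimp only at h
      rw [map_sub]; linear_combination h
    have hz2 : 2 * σ α * σ (y - y') - (σ β - β) * (y - y') = 0 := by
      have := congrArg σ hz
      simp only [map_add, map_mul, map_sub, hσ, map_zero, hm2] at this
      rw [map_sub]
      linear_combination this
    have : (4 * (α * σ α) + (σ β - β) ^ 2) * (y - y') = 0 := by
      linear_combination 2 * σ α * hz - (σ β - β) * hz2
    exact sub_eq_zero.mp ((mul_eq_zero.mp this).resolve_left hΔ)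
  choose y hy using fun i => hsurj (a i)
  set c' := c + -(α * ∑ i, y i ^ 2 - β * ∑ i, y i * σ (y i)) with hc'
  refine ⟨if σ c' - c' = 0 then 1 else 0, by split_ifs <;> simp, ?_⟩
  rw [count_char ψ hψ]
  simp_rw [← hev]
  have hall : ∀ s, ∑ x : Fin (2 * m) → F,
      e s (c + (∑ i, a i * x i + α * ∑ i, x i ^ 2 - β * ∑ i, x i * σ (x i)))
      = (if e s = 1 then (Fintype.card F : ℂ) ^ (2 * m) - (Fintype.card F : ℂ) ^ m else 0)
        + (Fintype.card F : ℂ) ^ m * ψ (s * (σ c' - c')) := by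
    intro s
    split_ifs with h
    · rw [← hev, h]; simp
    · simp_rw [AddChar.map_add_eq_mul (e s) c, ← Finset.mul_sum]
      rw [herm_sum σ hσ α β hΔ p _ hp hs hps (e s) h (fun z hz => by rw [hev, hz]; simp) m a y hy]
      rw [← hev, hc', AddChar.map_add_eq_mul]
      ring
  simp_rw [hall]
  rw [Finset.sum_add_distrib, ← Finset.mul_sum, AddChar.sum_mulShift _ hψ, ← Finset.sum_filter,
    Finset.sum_const, nsmul_eq_mul, hcard]
  split_ifs <;> push_cast <;> ring

theorem exists_ps {F : Type} [Field F] [Fintype F] (σ : F →+* F) (h2 : (2 : F) ≠ 0)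
    (Δ : F) (hΔ : Δ ≠ 0) (hσΔ : σ Δ = Δ) :
    ∃ p s, σ p = p ∧ σ s = s ∧ p ^ 2 - s ^ 2 * Δ = -1 := by
  classical
  let K := RingHom.eqLocusField σ (RingHom.id F)
  have hK : ∀ x, x ∈ K ↔ σ x = x := fun x => Iff.rfl
  let d : K := ⟨Δ, hσΔ⟩
  have hd : d ≠ 0 := fun h => hΔ (congrArg Subtype.val h)
  have hchar : ringChar K ≠ 2 := by
    intro h
    have h3 : ((2 : ℕ) : K) = 0 := by rw [← h]; exact ringChar.Nat.cast_ringChar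
    apply h2
    have := congrArg K.subtype h3
    rw [map_natCast, map_zero] at this
    exact_mod_cast this
  have hodd := FiniteField.odd_card_of_char_ne_two hchar
  obtain ⟨a, b, hab⟩ := FiniteField.exists_root_sum_quadratic
    (f := (Polynomial.X ^ 2 - Polynomial.C (-1) : Polynomial K))
    (g := Polynomial.C (-d) * Polynomial.X ^ 2)
    (Polynomial.degree_X_pow_sub_C (by norm_num) _)
    (Polynomial.degree_C_mul_X_pow 2 (neg_ne_zero.mpr hd)) hodd
  refine ⟨a, b, a.2, b.2, ?_⟩
  have := congrArg Subtype.val hab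
  simp [d] at this
  linear_combination this

theorem card_fixed {F : Type} [Field F] [Fintype F] (q : ℕ) (hq : 1 < q)
    (hF : Fintype.card F = q ^ 2) (σ : F →+* F) (hσq : ∀ x, σ x = x ^ q) :
    Nat.card {z : F // σ z - z = 0} = q := by
  classical
  have hσ : ∀ x, σ (σ x) = x := by
    intro x
    rw [hσq, hσq, ← pow_mul, ← sq, ← hF, FiniteField.pow_card]
  have ub : ∀ ε : F, Nat.card {z : F // σ z + ε * z = 0} ≤ q := by
    intro ε
    let P : Polynomial F := Polynomial.X ^ q + Polynomial.C ε * Polynomial.X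
    have hdeg : P.natDegree = q := by
      have : (Polynomial.C ε * Polynomial.X : Polynomial F).degree < (q : ℕ) := by
        refine lt_of_le_of_lt (Polynomial.degree_C_mul_X_le ε) ?_
        exact_mod_cast hq
      apply Polynomial.natDegree_eq_of_degree_eq_some
      rw [Polynomial.degree_add_eq_left_of_degree_lt] <;> rw [Polynomial.degree_X_pow]
      exact this
    have hP : P ≠ 0 := by
      intro h; rw [h] at hdeg; simp at hdeg; omega
    have hsub : (Finset.univ.filter fun z : F => σ z + ε * z = 0) ⊆ P.roots.toFinset := by
      intro z hz
      simp only [Finset.mem_filter, Finset.mem_univ, true_and] at hz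
      rw [Multiset.mem_toFinset, Polynomial.mem_roots hP]
      simpa [P, Polynomial.IsRoot, ← hσq] using hz
    rw [Nat.card_eq_fintype_card, Fintype.card_subtype]
    calc _ ≤ _ := Finset.card_le_card hsub
      _ ≤ _ := Multiset.toFinset_card_le _
      _ ≤ _ := Polynomial.card_roots' P
      _ = q := hdeg
  let T : F →+ F := σ.toAddMonoidHom - AddMonoidHom.id F
  have hT : ∀ z, T z = σ z - z := fun z => rfl
  have h1 := T.ker.card_mul_index
  rw [AddSubgroup.index_ker] at h1
  have hker : Nat.card T.ker = Nat.card {z : F // σ z - z = 0} :=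
    Nat.card_congr (Equiv.subtypeEquivRight fun z => Iff.rfl)
  have hran : Nat.card T.range ≤ Nat.card {z : F // σ z + 1 * z = 0} := by
    apply Nat.card_mono (Set.toFinite _)
    rintro _ ⟨z, rfl⟩
    show σ (T z) + 1 * T z = 0
    rw [hT, map_sub, hσ]; ring
  have hu1 := ub 1
  have hu2 : Nat.card {z : F // σ z - z = 0} ≤ q := by
    have := ub (-1)
    simpa [← sub_eq_add_neg] using this
  rw [hker, Nat.card_eq_fintype_card (α := F), hF] at h1
  nlinarith [Nat.zero_le (Nat.card T.range)]

theorem proj_aff {F : Type} [Field F] (n : ℕ) (A : (Fin (n + 1) → F) → Prop) :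
    Nat.card {P : Projectivization F (Fin (n + 1) → F) //
      P.rep 0 ≠ 0 ∧ A (fun i => P.rep i / P.rep 0)} = Nat.card {v // v 0 = 1 ∧ A v} := by
  have hne : ∀ v : Fin (n + 1) → F, v 0 = 1 → v ≠ 0 := by
    rintro v hv rfl; simp at hv
  have hrep : ∀ (v : Fin (n + 1) → F) (hv : v 0 = 1),
      (Projectivization.mk F v (hne v hv)).rep 0 ≠ 0 ∧
      (fun i => (Projectivization.mk F v (hne v hv)).rep i /
        (Projectivization.mk F v (hne v hv)).rep 0) = v := by
    intro v hv
    obtain ⟨u, hu⟩ := Projectivization.exists_smul_eq_mk_rep F v (hne v hv)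
    rw [← hu]
    simp only [Units.smul_def, Pi.smul_apply, smul_eq_mul, hv, mul_one]
    refine ⟨u.ne_zero, ?_⟩
    ext i
    field_simp
  refine Nat.card_congr
    { toFun := fun P => ⟨fun i => P.1.rep i / P.1.rep 0, div_self P.2.1, P.2.2⟩
      invFun := fun v => ⟨Projectivization.mk F v.1 (hne v.1 v.2.1), (hrep v.1 v.2.1).1, by
        rw [(hrep v.1 v.2.1).2]; exact v.2.2⟩
      left_inv := ?_
      right_inv := ?_ }
  · rintro ⟨P, hP, hA⟩
    apply Subtype.ext
    dsimp only
    conv_rhs => rw [← P.mk_rep]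
    rw [Projectivization.mk_eq_mk_iff']
    refine ⟨(P.rep 0)⁻¹, ?_⟩
    ext i
    simp [div_eq_inv_mul]
  · rintro ⟨v, hv, hA⟩
    apply Subtype.ext
    exact (hrep v hv).2

theorem proj_inf {F V : Type} [Field F] [Fintype F] [AddCommGroup V] [Module F V] [Finite V]
    (C : V → Prop)
    (h0 : C 0) (hC : ∀ (u : Fˣ) v, C v → C (u • v)) :
    Nat.card {P : Projectivization F V // C P.rep} * (Fintype.card F - 1) + 1
      = Nat.card {v // C v} := by
  classical
  have e1 : Nat.card ({P : Projectivization F V // C P.rep} × Fˣ)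
      = Nat.card {v // v ≠ 0 ∧ C v} := by
    refine Nat.card_eq_of_bijective
      (fun p => ⟨p.2 • p.1.1.rep, (smul_ne_zero_iff_ne p.2).mpr p.1.1.rep_nonzero,
        hC _ _ p.1.2⟩) ⟨?_, ?_⟩
    · rintro ⟨⟨P, hP⟩, u⟩ ⟨⟨P', hP'⟩, u'⟩ h
      have h' : u • P.rep = u' • P'.rep := congrArg Subtype.val h
      have hPP : P = P' := by
        rw [← P.mk_rep, ← P'.mk_rep, Projectivization.mk_eq_mk_iff]
        refine ⟨u⁻¹ * u', ?_⟩
        rw [mul_smul, ← h', inv_smul_smul]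
      subst hPP
      have : (u : F) = u' := by
        have h3 : (u : F) • P.rep = (u' : F) • P.rep := h'
        exact smul_left_injective F P.rep_nonzero h3
      have := Units.ext this
      subst this
      rfl
    · rintro ⟨v, hv, hCv⟩
      obtain ⟨u, hu⟩ := Projectivization.exists_smul_eq_mk_rep F v hv
      refine ⟨⟨⟨Projectivization.mk F v hv, by rw [← hu]; exact hC _ _ hCv⟩, u⁻¹⟩, ?_⟩
      apply Subtype.ext
      show u⁻¹ • (Projectivization.mk F v hv).rep = v
      rw [← hu, inv_smul_smul]
  rw [Nat.card_prod, Nat.card_eq_fintype_card (α := Fˣ), Fintype.card_units] at e1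
  rw [e1]
  have : {v | C v} = insert 0 {v | v ≠ 0 ∧ C v} := by
    ext v
    by_cases hv : v = 0
    · simp [hv, h0]
    · simp [hv]
  have h3 := Set.ncard_insert_of_notMem (a := (0 : V)) (s := {v | v ≠ 0 ∧ C v}) (by simp)
    (Set.toFinite _)
  rw [← this] at h3
  exact h3.symm

def consSnoc {F : Type} {n : ℕ} (c : F) (p : (Fin n → F) × F) : Fin (n + 1 + 1) → F :=
  Fin.cons (α := fun _ => F) c (Fin.snoc (α := fun _ => F) p.1 p.2)

theorem card_consSnoc {F : Type} (n : ℕ) (c : F) (A : (Fin (n + 1 + 1) → F) → Prop) :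
    Nat.card {v : Fin (n + 1 + 1) → F // v 0 = c ∧ A v}
      = Nat.card {p : (Fin n → F) × F // A (consSnoc c p)} := by
  symm
  refine Nat.card_eq_of_bijective (fun p => ⟨consSnoc c p.1, by simp [consSnoc], p.2⟩) ⟨?_, ?_⟩
  · rintro ⟨⟨x, z⟩, hp⟩ ⟨⟨x', z'⟩, hp'⟩ h
    have h' : consSnoc c (x, z) = consSnoc c (x', z') := congrArg Subtype.val h
    have h1 := (Fin.cons_injective2 h').2
    have h2 := Fin.snoc_injective2 h1
    exact Subtype.ext (Prod.ext h2.1 h2.2)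
  · rintro ⟨v, hv, hA⟩
    have : consSnoc c (Fin.init (α := fun _ => F) (Fin.tail (α := fun _ => F) v),
        Fin.tail (α := fun _ => F) v (Fin.last n)) = v := by
      simp only [consSnoc, Fin.snoc_init_self]
      rw [← hv, Fin.cons_self_tail]
    exact ⟨⟨_, by rw [this]; exact hA⟩, Subtype.ext this⟩

theorem sum_mid {F : Type} [Field F] (n : ℕ) (c : F) (p : (Fin n → F) × F) (φ : F → F) :
    (∑ i : Fin (n + 1 + 1), if 1 ≤ i.1 ∧ i.1 < n + 1 then φ (consSnoc c p i) else 0)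
      = ∑ i, φ (p.1 i) := by
  rw [Fin.sum_univ_succ, Fin.sum_univ_castSucc]
  simp [consSnoc]

theorem dual_consSnoc {F : Type} [Field F] (n : ℕ) (f : Module.Dual F (Fin (n + 1 + 1) → F)) :
    ∃ (c₀ : F) (a : Fin n → F) (b : F), (f ≠ 0 → ¬ (c₀ = 0 ∧ a = 0 ∧ b = 0)) ∧
      (f = 0 → (c₀ = 0 ∧ a = 0 ∧ b = 0)) ∧
      ∀ c p, f (consSnoc c p) = c₀ * c + ∑ i, a i * p.1 i + b * p.2 := by
  have hf : ∀ c p, f (consSnoc c p) = f (Pi.single 0 1) * c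
      + ∑ i : Fin n, f (Pi.single i.castSucc.succ 1) * p.1 i
      + f (Pi.single (Fin.last n).succ 1) * p.2 := by
    intro c p
    rw [LinearMap.pi_apply_eq_sum_univ f, Fin.sum_univ_succ, Fin.sum_univ_castSucc]
    have hs : ∀ i : Fin (n + 1 + 1), (fun j => if i = j then (1 : F) else 0) = Pi.single i 1 := by
      intro i; ext j; simp [Pi.single_apply, eq_comm]
    simp only [hs]
    simp [consSnoc, mul_comm]
    ring
  refine ⟨_, _, _, ?_, ?_, hf⟩
  · rintro hne ⟨h1, h2, h3⟩
    apply hne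
    ext i
    have h2' := fun i => congrFun h2 i
    simp only [Pi.zero_apply] at h2'
    simp only [LinearMap.coe_comp, LinearMap.coe_single, Function.comp_apply, LinearMap.zero_apply]
    induction i using Fin.cases with
    | zero => exact h1
    | succ i =>
      induction i using Fin.lastCases with
      | last => exact h3
      | cast i => exact h2' i
  · rintro rfl
    refine ⟨rfl, ?_, rfl⟩
    ext i; rfl

theorem affEq_consSnoc {F : Type} [Field F] (q n : ℕ) (α β : F) (σ : F →+* F)
    (hσq : ∀ x, σ x = x ^ q) (hσ : ∀ x, σ (σ x) = x) (p : (Fin n → F) × F) :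
    affEq q (n + 1) α β (consSnoc 1 p) ↔
      σ (p.2 + (α * ∑ i, p.1 i ^ 2 - β * ∑ i, p.1 i * σ (p.1 i)))
        - (p.2 + (α * ∑ i, p.1 i ^ 2 - β * ∑ i, p.1 i * σ (p.1 i))) = 0 := by
  unfold affEq
  rw [sum_mid n 1 p (fun x => x ^ (2 * q)), sum_mid n 1 p (fun x => x ^ 2),
    sum_mid n 1 p (fun x => x ^ (q + 1))]
  have hl : consSnoc (1 : F) p (Fin.last (n + 1)) = p.2 := by
    rw [← Fin.succ_last]; simp [consSnoc]
  rw [hl]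
  simp only [map_add, map_sub, map_mul, map_sum, map_pow, hσ]
  have e1 : ∀ x : F, x ^ (2 * q) = σ x ^ 2 := fun x => by rw [hσq, mul_comm, pow_mul]
  have e2 : ∀ x : F, x ^ (q + 1) = x * σ x := fun x => by rw [hσq]; ring
  have e3 : ∀ x : F, σ x * x = x * σ x := fun x => mul_comm _ _
  simp_rw [e1, e2, e3, ← hσq]
  constructor <;> intro h <;> linear_combination h

theorem main_count {F : Type} [Field F] [Fintype F] (q n : ℕ) (α β : F) (σ : F →+* F)
    (hσq : ∀ x, σ x = x ^ q) (hσ : ∀ x, σ (σ x) = x) (f : Module.Dual F (Fin (n + 1 + 1) → F))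
    (c₀ : F) (a : Fin n → F) (b : F)
    (hf : ∀ c p, f (consSnoc c p) = c₀ * c + ∑ i, a i * p.1 i + b * p.2) :
    ∃ J, J * (Fintype.card F - 1) + 1 = Nat.card {p : (Fin n → F) × F //
        ∑ i, p.1 i ^ 2 = 0 ∧ ∑ i, a i * p.1 i + b * p.2 = 0} ∧
      Nat.card ↥(Bset F q (n + 1) α β ∩ {P | f P.rep = 0}) =
        Nat.card {p : (Fin n → F) × F // σ (p.2 + (α * ∑ i, p.1 i ^ 2 - β * ∑ i, p.1 i * σ (p.1 i)))
        - (p.2 + (α * ∑ i, p.1 i ^ 2 - β * ∑ i, p.1 i * σ (p.1 i))) = 0 ∧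
        c₀ + ∑ i, a i * p.1 i + b * p.2 = 0} + J := by
  refine ⟨Nat.card {P : Projectivization F (Fin (n + 1 + 1) → F) // P.rep 0 = 0 ∧
    (∑ i : Fin (n + 1 + 1), if 1 ≤ i.1 ∧ i.1 < n + 1 then P.rep i ^ 2 else 0) = 0
      ∧ f P.rep = 0}, ?_, ?_⟩
  · rw [proj_inf (F := F) (V := Fin (n + 1 + 1) → F) (fun v => v 0 = 0 ∧
      (∑ i : Fin (n + 1 + 1), if 1 ≤ i.1 ∧ i.1 < n + 1 then v i ^ 2 else 0) = 0 ∧ f v = 0)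
      (by simp)]
    · rw [card_consSnoc n 0 (fun v =>
        (∑ i : Fin (n + 1 + 1), if 1 ≤ i.1 ∧ i.1 < n + 1 then v i ^ 2 else 0) = 0 ∧ f v = 0)]
      refine Nat.card_congr (Equiv.subtypeEquivRight fun p => ?_)
      rw [sum_mid n 0 p (fun x => x ^ 2), hf]
      simp
    · rintro u v ⟨h1, h2, h3⟩
      refine ⟨by simp [h1], ?_, by rw [Units.smul_def, map_smul, h3, smul_zero]⟩
      have : ∀ i : Fin (n + 1 + 1), (if 1 ≤ i.1 ∧ i.1 < n + 1 then (u • v) i ^ 2 else 0)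
          = (u : F) ^ 2 * (if 1 ≤ i.1 ∧ i.1 < n + 1 then v i ^ 2 else 0) := by
        intro i
        split_ifs <;> simp [Units.smul_def, mul_pow]
      simp_rw [this]
      rw [← Finset.mul_sum, h2, mul_zero]
  · have ha := proj_aff (F := F) (n + 1) (fun v => affEq q (n + 1) α β v ∧ f v = 0)
    rw [card_consSnoc n 1 (fun v => affEq q (n + 1) α β v ∧ f v = 0)] at ha
    simp_rw [affEq_consSnoc q n α β σ hσq hσ, hf, mul_one] at ha
    rw [← ha]
    have hu : Bset F q (n + 1) α β ∩ {P | f P.rep = 0} =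
      {P | P.rep 0 ≠ 0 ∧ affEq q (n + 1) α β (fun i => P.rep i / P.rep 0) ∧
        f (fun i => P.rep i / P.rep 0) = 0} ∪
      {P | P.rep 0 = 0 ∧
      (∑ i : Fin (n + 1 + 1), if 1 ≤ i.1 ∧ i.1 < n + 1 then P.rep i ^ 2 else 0) = 0
      ∧ f P.rep = 0} := by
      ext P
      have hfP : P.rep 0 ≠ 0 → (f (fun i => P.rep i / P.rep 0) = 0 ↔ f P.rep = 0) := by
        intro h
        have : (fun i => P.rep i / P.rep 0) = (P.rep 0)⁻¹ • P.rep := by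
          ext i; simp [div_eq_inv_mul]
        rw [this, map_smul]; simp [h]
      simp only [Bset, Set.mem_inter_iff, Set.mem_setOf_eq, Set.mem_union]
      by_cases h : P.rep 0 = 0
      · simp [h]
      · rw [hfP h]; simp [h]
    rw [hu]
    apply Set.ncard_union_eq
    · rw [Set.disjoint_left]
      rintro P ⟨h1, -⟩ ⟨h2, -⟩
      exact h1 h2
    · exact Set.toFinite _
    · exact Set.toFinite _

theorem card_shear {X F : Type} [AddGroup F] [Finite X] [Finite F] (P : X → Prop) (R : F → Prop)
    (h : X → F) :
    Nat.card {p : X × F // P p.1 ∧ R (p.2 + h p.1)} = Nat.card {x // P x} * Nat.card {z // R z} := by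
  rw [← Nat.card_prod]
  exact Nat.card_congr
    { toFun := fun p => (⟨p.1.1, p.2.1⟩, ⟨p.1.2 + h p.1.1, p.2.2⟩)
      invFun := fun p => ⟨(p.1.1, p.2.1 - h p.1.1), p.1.2, by simpa using p.2.2⟩
      left_inv := by rintro ⟨⟨x, z⟩, hp⟩; simp
      right_inv := by rintro ⟨⟨x, hx⟩, ⟨z, hz⟩⟩; simp }

theorem card_graph {X F : Type} [Field F] (P : X × F → Prop) (h : X → F) (b : F) (hb : b ≠ 0) :
    Nat.card {p : X × F // P p ∧ h p.1 + b * p.2 = 0} = Nat.card {x // P (x, - h x / b)} := by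
  have key : ∀ x z, h x + b * z = 0 → z = - h x / b := by
    intro x z hz
    rw [eq_div_iff hb]; linear_combination hz
  exact Nat.card_congr
    { toFun := fun p => ⟨p.1.1, by
        have := key _ _ p.2.2
        rw [← this]; exact p.2.1⟩
      invFun := fun x => ⟨(x.1, - h x.1 / b), x.2, by field_simp; ring⟩
      left_inv := by
        rintro ⟨⟨x, z⟩, hp⟩
        have := key _ _ hp.2
        simp only [Subtype.mk.injEq, Prod.mk.injEq, true_and]
        exact this.symm
      right_inv := by rintro ⟨x, hx⟩; rfl }

theorem final_arith (q t r : ℕ) (hq : 1 < q) (hr : r = 2 * t + 3) (N1 : ℕ)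
    (hN1 : ((q : ℤ) ^ 2) * N1 = ((q : ℤ) ^ 2) ^ (2 * (t + 1))
      + ((q : ℤ) ^ 2 - 1) * ((q : ℤ) ^ 2) ^ (t + 1)) :
    (∀ J : ℕ, J * (q ^ 2 - 1) + 1 = N1 * q ^ 2 →
      (q ^ 2) ^ (2 * (t + 1)) * q + J = q ^ (2 * r - 1) + q ^ (r - 1)
        + (q ^ (2 * (r - 1)) - q ^ 2) / (q ^ 2 - 1) + 1 ∧
      J = q ^ 2 * ((q ^ (2 * (r - 2)) - 1) / (q ^ 2 - 1)) + q ^ (r - 1) + 1) ∧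
    (∀ J N3 : ℕ, ∀ δ : ℤ, (δ = 0 ∨ δ = 1) → J * (q ^ 2 - 1) + 1 = N1 →
      ((q : ℤ) ^ 2) * N3 = q * ((q : ℤ) ^ 2) ^ (2 * (t + 1))
        + ((q : ℤ) ^ 2) ^ (t + 1) * (δ * (q : ℤ) ^ 2 - q) →
      (N3 + J = q ^ (2 * r - 3) - q ^ (r - 2) + q ^ (r - 3)
        + (q ^ (2 * (r - 2)) - 1) / (q ^ 2 - 1) ∨
       N3 + J = q ^ (2 * r - 3) + q ^ (r - 1) - q ^ (r - 2) + q ^ (r - 3)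
            + (q ^ (2 * (r - 2)) - 1) / (q ^ 2 - 1))) ∧
    (∀ J N2 L : ℕ, ∀ δ : ℤ, (δ = 0 ∨ δ = 1) → J * (q ^ 2 - 1) + 1 = N2 * q ^ 2 →
      ((q : ℤ) ^ 2) ^ 2 * N2 = ((q : ℤ) ^ 2) ^ (2 * (t + 1))
        + δ * (((q : ℤ) ^ 2 - 1) * ((q : ℤ) ^ 2) ^ (t + 1 + 1)) →
      ((q : ℤ) ^ 2) * L = ((q : ℤ) ^ 2) ^ (2 * (t + 1)) →
      (L * q + J = q ^ (2 * r - 3) + (q ^ (2 * (r - 2)) - q ^ 2) / (q ^ 2 - 1) + 1 ∨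
       L * q + J = q ^ (2 * r - 3) + q ^ (r - 1)
         + (q ^ (2 * (r - 2)) - q ^ 2) / (q ^ 2 - 1) + 1)) := by
  subst hr
  have x1 : 2 * (2 * t + 3) - 1 = 4 * t + 5 := by omega
  have x2 : 2 * t + 3 - 1 = 2 * t + 2 := by omega
  have x3 : 2 * t + 3 - 2 = 2 * t + 1 := by omega
  have x4 : 2 * t + 3 - 3 = 2 * t := by omega
  have x5 : 2 * (2 * t + 3) - 3 = 4 * t + 3 := by omega
  rw [x1, x2, x3, x4, x5]
  have hQ : 1 < q ^ 2 := Nat.one_lt_pow (by norm_num) hq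
  obtain ⟨D, hD⟩ : ∃ D, q ^ 2 = D + 1 := ⟨q ^ 2 - 1, by omega⟩
  have hD0 : 0 < D := by omega
  obtain ⟨G, hG⟩ : ∃ G, q ^ (4 * t + 2) = (G + 1) * D + 1 := by
    have h1 : q ^ 2 - 1 ∣ q ^ (4 * t + 2) - 1 := by
      have := Nat.sub_dvd_pow_sub_pow (q ^ 2) 1 (2 * t + 1)
      rw [one_pow, ← pow_mul] at this
      convert this using 3; ring
    rw [hD, Nat.add_sub_cancel] at h1
    obtain ⟨G, hG⟩ := h1
    have h2 : q ^ 2 ≤ q ^ (4 * t + 2) := Nat.pow_le_pow_right (by omega) (by omega)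
    rcases G with _ | G
    · simp at hG; omega
    · exact ⟨G, by rw [mul_comm D] at hG; omega⟩
  have y1 : (q ^ (2 * (2 * t + 1)) - 1) / (q ^ 2 - 1) = G + 1 := by
    have : 2 * (2 * t + 1) = 4 * t + 2 := by ring
    rw [this, hG, hD, Nat.add_sub_cancel, Nat.add_sub_cancel, Nat.mul_div_cancel _ hD0]
  have y2 : (q ^ (2 * (2 * t + 1)) - q ^ 2) / (q ^ 2 - 1) = G := by
    have : 2 * (2 * t + 1) = 4 * t + 2 := by ring
    rw [this, hG, hD, Nat.add_sub_cancel]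
    have : (G + 1) * D + 1 - (D + 1) = G * D := by rw [add_mul]; omega
    rw [this, Nat.mul_div_cancel _ hD0]
  have y3 : (q ^ (2 * (2 * t + 2)) - q ^ 2) / (q ^ 2 - 1) = q ^ 2 * (G + 1) := by
    have : q ^ (2 * (2 * t + 2)) = q ^ 2 * q ^ (4 * t + 2) := by ring
    rw [this, hG]
    have h3 : q ^ 2 * ((G + 1) * D + 1) - q ^ 2 = q ^ 2 * (G + 1) * D := by
      rw [mul_add, mul_one, Nat.add_sub_cancel, mul_assoc]
    rw [h3, hD, Nat.add_sub_cancel, Nat.mul_div_cancel _ hD0]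
  rw [y1, y2, y3]
  have hle : q ^ (2 * t + 1) ≤ q ^ (4 * t + 3) := Nat.pow_le_pow_right (by omega) (by omega)
  have hDz : (D : ℤ) ≠ 0 := by exact_mod_cast hD0.ne'
  have hqz : (q : ℤ) ≠ 0 := by exact_mod_cast (by omega : q ≠ 0)
  have hDz' : (D : ℤ) = (q : ℤ) ^ 2 - 1 := by
    have : ((q : ℤ)) ^ 2 = D + 1 := by exact_mod_cast hD
    linarith
  have hDn : q ^ 2 - 1 = D := by omega
  rw [hDn]
  have hGz : (q : ℤ) ^ (4 * t + 2) = (G + 1) * D + 1 := by exact_mod_cast hG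
  set w : ℤ := (q : ℤ) ^ (2 * t) with hw
  have z1 : ((q : ℤ) ^ 2) ^ (2 * (t + 1)) = (q : ℤ) ^ 4 * w ^ 2 := by rw [hw]; ring
  have z2 : ((q : ℤ) ^ 2) ^ (t + 1) = (q : ℤ) ^ 2 * w := by rw [hw]; ring
  have z3 : ((q : ℤ) ^ 2) ^ (t + 1 + 1) = (q : ℤ) ^ 4 * w := by rw [hw]; ring
  have z4 : (q : ℤ) ^ (4 * t + 2) = (q : ℤ) ^ 2 * w ^ 2 := by rw [hw]; ring
  have z5 : (q : ℤ) ^ (4 * t + 5) = (q : ℤ) ^ 5 * w ^ 2 := by rw [hw]; ring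
  have z6 : (q : ℤ) ^ (2 * t + 2) = (q : ℤ) ^ 2 * w := by rw [hw]; ring
  have z7 : (q : ℤ) ^ (2 * t + 1) = (q : ℤ) * w := by rw [hw]; ring
  have z8 : (q : ℤ) ^ (4 * t + 3) = (q : ℤ) ^ 3 * w ^ 2 := by rw [hw]; ring
  rw [z4, hDz'] at hGz
  rw [hDz'] at hDz
  rw [z1, z2] at hN1
  have hN1' : (N1 : ℤ) = (q : ℤ) ^ 2 * w ^ 2 + ((q : ℤ) ^ 2 - 1) * w :=
    mul_left_cancel₀ (pow_ne_zero 2 hqz) (by rw [hN1]; ring)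
  refine ⟨?_, ?_, ?_⟩
  · intro J hJ
    have hJz : (J : ℤ) * D + 1 = N1 * (q : ℤ) ^ 2 := by exact_mod_cast hJ
    rw [hDz', hN1'] at hJz
    have hJ2 : (J : ℤ) = (q : ℤ) ^ 2 * (G + 1) + (q : ℤ) ^ 2 * w + 1 :=
      mul_right_cancel₀ hDz (by linear_combination hJz + (q : ℤ) ^ 2 * hGz)
    constructor
    · zify
      rw [z1, z5, z6, hJ2]; ring
    · zify
      rw [z6, hJ2]
  · intro J N3 δ hδ hJ hN3
    have hJz : (J : ℤ) * D + 1 = N1 := by exact_mod_cast hJ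
    rw [hDz', hN1'] at hJz
    have hJ2 : (J : ℤ) = G + 1 + w :=
      mul_right_cancel₀ hDz (by linear_combination hJz + hGz)
    rw [z1, z2] at hN3
    have hN3' : (N3 : ℤ) = (q : ℤ) ^ 3 * w ^ 2 + w * (δ * (q : ℤ) ^ 2 - q) :=
      mul_left_cancel₀ (pow_ne_zero 2 hqz) (by rw [hN3]; ring)
    rcases hδ with rfl | rfl
    · left
      zify [hle]
      rw [z8, z7, hJ2, hN3']; ring
    · right
      have hle2 : q ^ (2 * t + 1) ≤ q ^ (4 * t + 3) + q ^ (2 * t + 2) := by omega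
      zify [hle2]
      rw [z8, z7, z6, hJ2, hN3']; ring
  · intro J N2 L δ hδ hJ hN2 hL
    have hJz : (J : ℤ) * D + 1 = N2 * (q : ℤ) ^ 2 := by exact_mod_cast hJ
    rw [z1, z3] at hN2
    rw [z1] at hL
    have hN2' : (N2 : ℤ) = w ^ 2 + δ * (((q : ℤ) ^ 2 - 1) * w) :=
      mul_left_cancel₀ (pow_ne_zero 4 hqz) (by linear_combination hN2)
    have hL' : (L : ℤ) = (q : ℤ) ^ 2 * w ^ 2 :=
      mul_left_cancel₀ (pow_ne_zero 2 hqz) (by linear_combination hL)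
    rw [hDz', hN2'] at hJz
    have hJ2 : (J : ℤ) = G + 1 + δ * ((q : ℤ) ^ 2 * w) :=
      mul_right_cancel₀ hDz (by linear_combination hJz + hGz)
    rcases hδ with rfl | rfl
    · left
      zify
      rw [z8, hJ2, hL']; ring
    · right
      zify
      rw [z8, z6, hJ2, hL']; ring

theorem exists_frob {F : Type} [Field F] [Fintype F] (q : ℕ) (hq : IsPrimePow q)
    (hF : Fintype.card F = q ^ 2) : ∃ σ : F →+* F, ∀ x, σ x = x ^ q := by
  rw [isPrimePow_nat_iff] at hq
  obtain ⟨p, k, hp, hk, rfl⟩ := hq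
  have h0 : (p : F) = 0 := by
    have := FiniteField.cast_card_eq_zero F
    rw [hF] at this
    push_cast at this
    exact eq_zero_of_pow_eq_zero (n := k) (eq_zero_of_pow_eq_zero (n := 2) this)
  have h1 := CharP.ringChar_of_prime_eq_zero hp h0
  haveI : CharP F p := ringChar.of_eq h1
  haveI : Fact p.Prime := ⟨hp⟩
  exact ⟨iterateFrobenius F p k, fun x => iterateFrobenius_def p k x⟩

/-- size and hyperplane intersection numbers of `B` for `q` odd and
`r ≥ 3` odd, with `4α^{q+1} + (β^q−β)² ≠ 0`. -/
theorem statement2 (q r : ℕ) (hq : IsPrimePow q) (hqodd : Odd q)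
    (hr : 3 ≤ r) (hrodd : Odd r)
    (F : Type) [Field F] [Fintype F] (hF : Fintype.card F = q ^ 2)
    (α β : F) (hα : α ≠ 0) (hβ : β ^ q ≠ β)
    (hcond : 4 * α ^ (q + 1) + (β ^ q - β) ^ 2 ≠ 0) :
    Nat.card ↥(Bset F q r α β) =
        q ^ (2 * r - 1) + q ^ (r - 1) + (q ^ (2 * (r - 1)) - q ^ 2) / (q ^ 2 - 1) + 1 ∧
    ∀ f : Module.Dual F (Fin (r + 1) → F), f ≠ 0 →
      Nat.card ↥(Bset F q r α β ∩ {P | f P.rep = 0}) ∈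
        ({q ^ 2 * ((q ^ (2 * (r - 2)) - 1) / (q ^ 2 - 1)) + q ^ (r - 1) + 1,
          q ^ (2 * r - 3) - q ^ (r - 2) + q ^ (r - 3) + (q ^ (2 * (r - 2)) - 1) / (q ^ 2 - 1),
          q ^ (2 * r - 3) + (q ^ (2 * (r - 2)) - q ^ 2) / (q ^ 2 - 1) + 1,
          q ^ (2 * r - 3) + q ^ (r - 1) - q ^ (r - 2) + q ^ (r - 3)
            + (q ^ (2 * (r - 2)) - 1) / (q ^ 2 - 1),
          q ^ (2 * r - 3) + q ^ (r - 1) + (q ^ (2 * (r - 2)) - q ^ 2) / (q ^ 2 - 1) + 1}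
          : Set ℕ) := by
  obtain ⟨t, ht⟩ : ∃ t, r = 2 * (t + 1) + 1 := by
    obtain ⟨j, hj⟩ := hrodd
    exact ⟨j - 1, by omega⟩
  subst ht
  have hq1 : 1 < q := hq.one_lt
  obtain ⟨σ, hσq⟩ := exists_frob q hq hF
  have hσ : ∀ x, σ (σ x) = x := by
    intro x
    rw [hσq, hσq, ← pow_mul, ← sq, ← hF, FiniteField.pow_card]
  have h2 : (2 : F) ≠ 0 := by
    intro h
    have h3 := FiniteField.cast_card_eq_zero F
    rw [hF] at h3
    obtain ⟨j, hj⟩ := hqodd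
    rw [hj] at h3
    push_cast at h3
    rw [h] at h3
    simp at h3
  obtain ⟨I, hI⟩ : ∃ I : F, I * I = -1 := by
    have : IsSquare (-1 : F) := by
      rw [FiniteField.isSquare_neg_one_iff, hF, sq]
      have h4 : q % 4 = 1 ∨ q % 4 = 3 := by
        obtain ⟨j, hj⟩ := hqodd; omega
      rcases h4 with h4 | h4 <;> rw [Nat.mul_mod, h4] <;> norm_num
    obtain ⟨I, hI⟩ := this
    exact ⟨I, hI.symm⟩
  have hψ := AddChar.FiniteField.primitiveChar_to_Complex_isPrimitive F
  set ψ := AddChar.FiniteField.primitiveChar_to_Complex F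
  have hΔ : 4 * (α * σ α) + (σ β - β) ^ 2 ≠ 0 := by
    have : α * σ α = α ^ (q + 1) := by rw [hσq]; ring
    rw [this, hσq]; exact hcond
  have h4σ : σ 4 = 4 := map_ofNat σ 4
  obtain ⟨p, s, hp, hs, hps⟩ := exists_ps σ h2 _ hΔ (by
    simp only [map_add, map_mul, map_sub, map_pow, hσ, h4σ]; ring)
  have hk := card_fixed q hq1 hF σ hσq
  have hQC : (Fintype.card F : ℂ) = (q : ℂ) ^ 2 := by rw [hF]; push_cast; rfl
  have hQn : Nat.card F = q ^ 2 := by rw [Nat.card_eq_fintype_card, hF]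
  have c1 := cnt_one ψ hψ h2 I hI (t + 1)
  rw [hQC] at c1
  obtain ⟨A1, A2, A3⟩ := final_arith q t (2 * (t + 1) + 1) hq1 (by ring) _ (by exact_mod_cast c1)
  have hinf0 : ∀ (a : Fin (2 * (t + 1)) → F), Nat.card {p : (Fin (2 * (t + 1)) → F) × F //
        ∑ i, p.1 i ^ 2 = 0 ∧ ∑ i, a i * p.1 i + 0 * p.2 = 0}
        = Nat.card {x : Fin (2 * (t + 1)) → F // ∑ i, x i ^ 2 = 0 ∧ ∑ i, a i * x i = 0} * q ^ 2 := by
    intro a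
    have := card_shear (X := Fin (2 * (t + 1)) → F) (F := F)
      (fun x => ∑ i, x i ^ 2 = 0 ∧ ∑ i, a i * x i = 0) (fun _ => True) (fun _ => 0)
    rw [Nat.card_congr (Equiv.subtypeUnivEquiv (α := F) (p := fun _ => True) (fun _ => trivial)),
      hQn] at this
    rw [← this]
    simp
  have haff0 : ∀ (c₀ : F) (a : Fin (2 * (t + 1)) → F),
      Nat.card {p : (Fin (2 * (t + 1)) → F) × F //
        σ (p.2 + (α * ∑ i, p.1 i ^ 2 - β * ∑ i, p.1 i * σ (p.1 i)))
        - (p.2 + (α * ∑ i, p.1 i ^ 2 - β * ∑ i, p.1 i * σ (p.1 i))) = 0 ∧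
        c₀ + ∑ i, a i * p.1 i + 0 * p.2 = 0}
        = Nat.card {x : Fin (2 * (t + 1)) → F // c₀ + ∑ i, a i * x i = 0} * q := by
    intro c₀ a
    have := card_shear (X := Fin (2 * (t + 1)) → F) (F := F)
      (fun x => c₀ + ∑ i, a i * x i = 0) (fun z => σ z - z = 0)
      (fun x => α * ∑ i, x i ^ 2 - β * ∑ i, x i * σ (x i))
    rw [hk] at this
    rw [← this]
    refine Nat.card_congr (Equiv.subtypeEquivRight fun p => ?_)
    rw [and_comm, zero_mul, add_zero]
  have hz : Nat.card {x : Fin (2 * (t + 1)) → F // ∑ i, x i ^ 2 = 0 ∧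
      ∑ i, (0 : Fin (2 * (t + 1)) → F) i * x i = 0}
      = Nat.card {x : Fin (2 * (t + 1)) → F // ∑ i, x i ^ 2 = 0} := by
    simp
  constructor
  · obtain ⟨c₀, a, b, -, h0, hf⟩ := dual_consSnoc (2 * (t + 1))
      (0 : Module.Dual F (Fin (2 * (t + 1) + 1 + 1) → F))
    obtain ⟨rfl, rfl, rfl⟩ := h0 rfl
    obtain ⟨J, hJ, hN⟩ := main_count q _ α β σ hσq hσ _ _ _ _ hf
    rw [hinf0, hF, hz] at hJ
    rw [haff0] at hN
    have e1 : Nat.card {x : Fin (2 * (t + 1)) → F // (0 : F) +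
        ∑ i, (0 : Fin (2 * (t + 1)) → F) i * x i = 0} = (q ^ 2) ^ (2 * (t + 1)) := by
      rw [Nat.card_congr (Equiv.subtypeUnivEquiv (by simp)), Nat.card_fun, hQn]
      simp
    rw [e1, (A1 J hJ).1] at hN
    rw [← hN]
    simp
  · intro f hf0
    obtain ⟨c₀, a, b, h0, -, hf⟩ := dual_consSnoc (2 * (t + 1)) f
    obtain ⟨J, hJ, hN⟩ := main_count q _ α β σ hσq hσ _ _ _ _ hf
    have h0 := h0 hf0
    simp only [Set.mem_insert_iff, Set.mem_singleton_iff]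
    rw [hN]
    rw [hF] at hJ
    by_cases hb : b = 0
    · subst hb
      rw [hinf0] at hJ
      rw [haff0]
      by_cases ha : a = 0
      · subst ha
        have hc : c₀ ≠ 0 := fun h => h0 ⟨h, rfl, rfl⟩
        rw [hz] at hJ
        left
        rw [← (A1 J hJ).2]
        simp [hc]
      · classical
        have d2 := cnt_two ψ hψ h2 I hI (t + 1) a ha _ Iff.rfl
        have dl := cnt_lin ψ hψ _ a ha c₀
        rw [hQC] at d2 dl
        have := A3 J _ _ (if ∑ i, a i ^ 2 = 0 then 1 else 0) (by split_ifs <;> simp) hJ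
          (by
            split_ifs at d2 ⊢ with h
            · rw [one_mul]; exact_mod_cast d2
            · rw [zero_mul]; exact_mod_cast d2) (by exact_mod_cast dl)
        rcases this with h | h <;> rw [h] <;> simp
    · rw [card_graph (fun p : (Fin (2 * (t + 1)) → F) × F => ∑ i, p.1 i ^ 2 = 0)
        (fun x => ∑ i, a i * x i) b hb] at hJ
      rw [card_graph (fun p : (Fin (2 * (t + 1)) → F) × F =>
        σ (p.2 + (α * ∑ i, p.1 i ^ 2 - β * ∑ i, p.1 i * σ (p.1 i)))
        - (p.2 + (α * ∑ i, p.1 i ^ 2 - β * ∑ i, p.1 i * σ (p.1 i))) = 0)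
        (fun x => c₀ + ∑ i, a i * x i) b hb]
      obtain ⟨δ, hδ, d3⟩ := cnt_three ψ hψ σ hσ α β hΔ p s hp hs hps q hk (t + 1)
        (-c₀ / b) (fun i => -a i / b)
      have hx : ∀ x : Fin (2 * (t + 1)) → F,
          -c₀ / b + (∑ i, -a i / b * x i + α * ∑ i, x i ^ 2 - β * ∑ i, x i * σ (x i))
          = -(c₀ + ∑ i, a i * x i) / b + (α * ∑ i, x i ^ 2 - β * ∑ i, x i * σ (x i)) := by
        intro x
        have : ∑ i, -a i / b * x i = -(∑ i, a i * x i) / b := by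
          rw [← Finset.sum_neg_distrib, Finset.sum_div]
          exact Finset.sum_congr rfl fun i _ => by ring
        rw [this]; ring
      simp_rw [hx] at d3
      rw [hQC] at d3
      have := A2 J _ (if δ = 0 then 0 else 1) (by split_ifs <;> simp) hJ (by
        rcases hδ with rfl | rfl
        · rw [if_pos rfl]; exact_mod_cast d3
        · rw [if_neg one_ne_zero]; exact_mod_cast d3)
      rcases this with h | h
      · right; left; exact h
      · right; right; right; left; exact h
end

section
/- Let q > 2 be an even prime power and r ≥ 3 odd, and let B be the hypersurface of PG(r,q²) defined below. Then |B| = q^{2r−1}+q^{2(r−2)}+q^{2(r−3)}+⋯+q²+1, and for every hyperplane Σ of PG(r,q²) the cardinality |B ∩ Σ| belongs to the set {n₁, n₂, n₃, n₄, n₅}, where n₁ = (q^{2(r−1)}−1)/(q²−1), n₂ = q^{2r−3}−q^{r−2}+(q^{2(r−2)}−1)/(q²−1), n₃ = q^{2r−3}+(q^{2(r−2)}−1)/(q²−1), n₄ = q^{2r−3}+q^{r−1}−q^{r−2}+(q^{2(r−2)}−1)/(q²−1), and n₅ = q^{2r−3}+(q^{2(r−1)}−1)/(q²−1). -/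
/-- the trace-like additive map `z ↦ z^q + z` -/
def Tq {F : Type} [Field F] (q : ℕ) (hadd : ∀ a b : F, (a + b) ^ q = a ^ q + b ^ q) : F →+ F :=
  AddMonoidHom.mk' (fun z => z ^ q + z) (fun a b => by simp only [hadd]; ring)

theorem Tq_apply {F : Type} [Field F] (q : ℕ) (hadd : ∀ a b : F, (a + b) ^ q = a ^ q + b ^ q)
    (z : F) : Tq q hadd z = z ^ q + z := rfl

theorem hom_fiber {G H : Type} [AddCommGroup G] [AddCommGroup H] (h : G →+ H)
    (c : H) (hc : c ∈ h.range) : Nat.card {x : G // h x = c} = Nat.card h.ker := by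
  obtain ⟨x0, rfl⟩ := hc
  refine Nat.card_congr
    { toFun := fun x => ⟨x.1 - x0, by simp [AddMonoidHom.mem_ker, x.2]⟩
      invFun := fun y => ⟨y.1 + x0, by
        have := y.2
        rw [AddMonoidHom.mem_ker] at this
        simp [this]⟩
      left_inv := fun x => by simp
      right_inv := fun x => by simp }

theorem Tq_range {F : Type} [Field F] [Fintype F] [CharP F 2] (q : ℕ) (hq : 2 ≤ q)
    (hF : Fintype.card F = q ^ 2)
    (hadd : ∀ a b : F, (a + b) ^ q = a ^ q + b ^ q) :
    Nat.card (Tq q hadd).range = q ∧ ∀ c : F, c ^ q = c → c ∈ (Tq q hadd).range := by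
  classical
  have hinv : ∀ a : F, (a ^ q) ^ q = a := by
    intro a
    rw [← pow_mul, ← sq, ← hF, FiniteField.pow_card]
  have hker : ∀ c : F, c ∈ (Tq q hadd).ker ↔ c ^ q = c := by
    intro c
    rw [AddMonoidHom.mem_ker, Tq_apply, ← CharTwo.sub_eq_add, sub_eq_zero]
  have hle : (Tq q hadd).range ≤ (Tq q hadd).ker := by
    rintro _ ⟨z, rfl⟩
    rw [hker, Tq_apply, hadd, hinv, add_comm]
  have hk : Nat.card (Tq q hadd).ker ≤ q := by
    have h1 := FiniteField.X_pow_card_sub_X_natDegree_eq F (p := q) (by omega)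
    have h0 := FiniteField.X_pow_card_sub_X_ne_zero F (p := q) (by omega)
    have : ((Tq q hadd).ker : Set F) ⊆
        ((Polynomial.X ^ q - Polynomial.X : Polynomial F).roots.toFinset : Set F) := by
      intro c hc
      have hc' := (hker c).1 hc
      simp [h0, hc']
    calc Nat.card (Tq q hadd).ker = ((Tq q hadd).ker : Set F).ncard := rfl
      _ ≤ _ := Set.ncard_le_ncard this (Set.toFinite _)
      _ = _ := Set.ncard_coe_finset _
      _ ≤ _ := Multiset.toFinset_card_le _
      _ ≤ _ := Polynomial.card_roots' _
      _ = q := h1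
  have hm := (Tq q hadd).ker.card_mul_index
  rw [AddSubgroup.index_ker, Nat.card_eq_fintype_card (α := F), hF] at hm
  have hr : Nat.card (Tq q hadd).range ≤ Nat.card (Tq q hadd).ker :=
    Nat.card_mono (Set.toFinite _) hle
  have hre : Nat.card (Tq q hadd).range = q := by
    nlinarith
  refine ⟨hre, fun c hc => ?_⟩
  have : (Tq q hadd).range = (Tq q hadd).ker :=
    AddSubgroup.eq_of_le_of_card_ge hle (by omega)
  rw [this, hker, hc]

/-- fibre counting for `T ∘ h` with `h` surjective. -/
theorem Tq_comp_fiber {F : Type} [Field F] [Fintype F] [CharP F 2] (q : ℕ) (hq : 2 ≤ q)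
    (hF : Fintype.card F = q ^ 2)
    (hadd : ∀ a b : F, (a + b) ^ q = a ^ q + b ^ q) {G : Type} [AddCommGroup G]
    (h : G →+ F) (hs : Function.Surjective h) (m : ℕ) (hG : Nat.card G = q ^ (m + 1))
    (c : F) (hc : c ^ q = c) : Nat.card {x : G // Tq q hadd (h x) = c} = q ^ m := by
  obtain ⟨h1, h2⟩ := Tq_range q hq hF hadd
  have hr : ((Tq q hadd).comp h).range = (Tq q hadd).range := by
    ext z
    constructor
    · rintro ⟨x, rfl⟩; exact ⟨h x, rfl⟩
    · rintro ⟨x, rfl⟩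
      obtain ⟨y, rfl⟩ := hs x
      exact ⟨y, rfl⟩
  have h3 := hom_fiber ((Tq q hadd).comp h) c (by rw [hr]; exact h2 c hc)
  have hm := ((Tq q hadd).comp h).ker.card_mul_index
  rw [AddSubgroup.index_ker, hr, h1, hG, pow_succ] at hm
  rw [← Nat.eq_of_mul_eq_mul_right (by omega) hm, ← h3]
  rfl

theorem card_prod_sum {A B : Type} [Fintype A] [Fintype B] (P : A → B → Prop) :
    Nat.card {p : A × B // P p.1 p.2} = ∑ b : B, Nat.card {a : A // P a b} := by
  rw [← Nat.card_sigma]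
  exact Nat.card_congr
    { toFun := fun p => ⟨p.1.2, p.1.1, p.2⟩
      invFun := fun s => ⟨(s.2.1, s.1), s.2.2⟩
      left_inv := fun _ => rfl
      right_inv := fun _ => rfl }

/-- linear functional given by a vector -/
def dotHom {F : Type} [Field F] {k : ℕ} (w : Fin k → F) : (Fin k → F) →+ F :=
  AddMonoidHom.mk' (fun x => ∑ j, x j * w j)
    (fun a b => by simp [add_mul, Finset.sum_add_distrib])

theorem dotHom_apply {F : Type} [Field F] {k : ℕ} (w x : Fin k → F) :
  dotHom w x = ∑ j, x j * w j := rfl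

theorem dotHom_surj {F : Type} [Field F] {k : ℕ} (w : Fin k → F) (hw : w ≠ 0) :
    Function.Surjective (dotHom w) := by
  classical
  obtain ⟨j, hj⟩ := Function.ne_iff.1 hw
  intro c
  refine ⟨Pi.single j (c / w j), ?_⟩
  rw [dotHom_apply, Finset.sum_eq_single j]
  · simp at hj; simp [hj]
  · intro b _ hb; simp [hb]
  · simp

/-- the pair form of the quadric count -/
theorem pair_count {F : Type} [Field F] [Fintype F] [CharP F 2] (q : ℕ) (hq : 2 ≤ q)
    (hF : Fintype.card F = q ^ 2)
    (hadd : ∀ a b : F, (a + b) ^ q = a ^ q + b ^ q) (k : ℕ) (hk : 1 ≤ k)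
    (w : (Fin k → F) → (Fin k → F)) (hw : Function.Bijective w) (g : (Fin k → F) → F)
    (hg : ∀ z, g z ^ q = g z) :
    Nat.card {p : (Fin k → F) × (Fin k → F) // Tq q hadd (∑ j, p.1 j * w p.2 j) = g p.2}
      = q ^ (4 * k - 1) - q ^ (2 * k - 1) ∨
    Nat.card {p : (Fin k → F) × (Fin k → F) // Tq q hadd (∑ j, p.1 j * w p.2 j) = g p.2}
      = q ^ (4 * k - 1) + q ^ (2 * k) - q ^ (2 * k - 1) := by
  classical
  rw [card_prod_sum (fun (x z : Fin k → F) => Tq q hadd (∑ j, x j * w z j) = g z)]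
  obtain ⟨z0, hz0⟩ := hw.2 0
  have hc : Nat.card (Fin k → F) = q ^ (2 * k) := by
    simp [Nat.card_eq_fintype_card, hF, ← pow_mul]
  rw [← Finset.add_sum_erase _ _ (Finset.mem_univ z0)]
  have hrest : ∑ z ∈ Finset.univ.erase z0,
      Nat.card {x : Fin k → F // Tq q hadd (∑ j, x j * w z j) = g z}
      = (q ^ (2 * k) - 1) * q ^ (2 * k - 1) := by
    rw [Finset.sum_congr rfl (g := fun _ => q ^ (2 * k - 1))]
    · rw [Finset.sum_const, Finset.card_erase_of_mem (Finset.mem_univ _), Finset.card_univ,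
        ← Nat.card_eq_fintype_card, hc, smul_eq_mul]
    · intro z hz
      have hne : w z ≠ 0 := by
        intro h
        exact (Finset.ne_of_mem_erase hz) (hw.1 (h.trans hz0.symm))
      exact Tq_comp_fiber q hq hF hadd (dotHom (w z)) (dotHom_surj _ hne) (2 * k - 1)
        (by rw [hc]; congr 1; omega) (g z) (hg z)
  rw [hrest, hz0]
  have e1 : (q ^ (2 * k) - 1) * q ^ (2 * k - 1) = q ^ (4 * k - 1) - q ^ (2 * k - 1) := by
    rw [Nat.sub_mul, ← pow_add, one_mul]
    congr 2; omega
  have e2 : q ^ (2 * k - 1) ≤ q ^ (4 * k - 1) := Nat.pow_le_pow_right (by omega) (by omega)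
  rw [e1]
  by_cases h : g z0 = 0
  · right
    have : Nat.card {x : Fin k → F // Tq q hadd (∑ j, x j * (0 : Fin k → F) j) = g z0}
        = q ^ (2 * k) := by
      rw [← hc]
      apply Nat.card_congr
      apply Equiv.subtypeUnivEquiv
      intro x
      simp [h]
    rw [this]; omega
  · left
    have : Nat.card {x : Fin k → F // Tq q hadd (∑ j, x j * (0 : Fin k → F) j) = g z0}
        = 0 := by
      rw [Nat.card_eq_zero]
      left
      refine ⟨fun x => h ?_⟩
      have := x.2
      simpa using this.symm
    rw [this]; omega

/-- the quadric count -/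
theorem quad_count {F : Type} [Field F] [Fintype F] [CharP F 2] (q : ℕ) (hq : 2 ≤ q)
    (hF : Fintype.card F = q ^ 2)
    (hadd : ∀ a b : F, (a + b) ^ q = a ^ q + b ^ q) (k : ℕ) (hk : 1 ≤ k)
    (α δ c0 : F) (hδ : δ ≠ 0) (hδq : δ ^ q = δ) (c : Fin (k + k) → F) :
    Nat.card {u : Fin (k + k) → F // Tq q hadd (c0 + ∑ i, c i * u i + α * ∑ i, u i ^ 2)
        = δ * ∑ i, u i ^ (q + 1)}
      = q ^ (4 * k - 1) - q ^ (2 * k - 1) ∨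
    Nat.card {u : Fin (k + k) → F // Tq q hadd (c0 + ∑ i, c i * u i + α * ∑ i, u i ^ 2)
        = δ * ∑ i, u i ^ (q + 1)}
      = q ^ (4 * k - 1) + q ^ (2 * k) - q ^ (2 * k - 1) := by
  classical
  have hinv : ∀ a : F, (a ^ q) ^ q = a := by
    intro a
    rw [← pow_mul, ← sq, ← hF, FiniteField.pow_card]
  have hsum : ∀ (f : Fin k → F), (∑ j, f j) ^ q = ∑ j, f j ^ q := by
    intro f
    exact map_sum (AddMonoidHom.mk' (fun z : F => z ^ q) hadd) f Finset.univ
  set w : (Fin k → F) → (Fin k → F) :=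
    fun z j => c (Fin.castAdd k j) + c (Fin.natAdd k j) + δ * z j ^ q with hwdef
  set g : (Fin k → F) → F := fun z => δ * ∑ j, z j ^ (q + 1)
    + Tq q hadd (c0 + ∑ j, c (Fin.natAdd k j) * z j + α * ∑ j, z j ^ 2) with hgdef
  have hw : Function.Bijective w := by
    rw [← Finite.injective_iff_bijective]
    intro z z' h
    funext j
    have h1 := congrFun h j
    simp only [hwdef] at h1
    have h2 := mul_left_cancel₀ hδ (add_left_cancel h1)
    rw [← hinv (z j), h2, hinv]
  have hg : ∀ z, g z ^ q = g z := by
    intro z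
    simp only [hgdef, Tq_apply]
    rw [hadd, mul_pow, hδq, hsum, hadd (_ ^ q), hinv]
    congr 1
    · congr 1
      refine Finset.sum_congr rfl fun j _ => ?_
      rw [pow_succ, mul_pow, hinv, mul_comm]
    · rw [add_comm]
  have key := pair_count q hq hF hadd k hk w hw g hg
  have e : {p : (Fin k → F) × (Fin k → F) // Tq q hadd (∑ j, p.1 j * w p.2 j) = g p.2} ≃
      {u : Fin (k + k) → F // Tq q hadd (c0 + ∑ i, c i * u i + α * ∑ i, u i ^ 2)
        = δ * ∑ i, u i ^ (q + 1)} := by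
    let e0 : (Fin k → F) × (Fin k → F) ≃ (Fin (k + k) → F) :=
      { toFun := fun p => Fin.append p.1 (p.1 + p.2)
        invFun := fun u => (fun j => u (Fin.castAdd k j),
          fun j => u (Fin.castAdd k j) + u (Fin.natAdd k j))
        left_inv := fun p => by
          ext j
          · simp
          · simp only [Fin.append_left, Fin.append_right, Pi.add_apply]
            rw [← add_assoc, CharTwo.add_self_eq_zero, zero_add]
        right_inv := fun u => by
          ext i
          refine Fin.addCases (fun j => ?_) (fun j => ?_) i
          · simp
          · simp only [Fin.append_right, Pi.add_apply]
            rw [← add_assoc, CharTwo.add_self_eq_zero, zero_add] }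
    refine e0.subtypeEquiv ?_
    rintro ⟨x, z⟩
    simp only [e0, Equiv.coe_fn_mk, Fin.sum_univ_add, Fin.append_left, Fin.append_right,
      Pi.add_apply]
    have s2 : ∑ j, x j ^ 2 + ∑ j, (x j + z j) ^ 2 = ∑ j, z j ^ 2 := by
      rw [← Finset.sum_add_distrib]
      refine Finset.sum_congr rfl fun j _ => ?_
      rw [CharTwo.add_sq, ← add_assoc, CharTwo.add_self_eq_zero, zero_add]
    have s1 : ∑ j, c (Fin.castAdd k j) * x j + ∑ j, c (Fin.natAdd k j) * (x j + z j)
        = ∑ j, x j * (c (Fin.castAdd k j) + c (Fin.natAdd k j))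
          + ∑ j, c (Fin.natAdd k j) * z j := by
      rw [← Finset.sum_add_distrib, ← Finset.sum_add_distrib]
      exact Finset.sum_congr rfl fun j _ => by ring
    have s3 : δ * (∑ j, x j ^ (q + 1) + ∑ j, (x j + z j) ^ (q + 1))
        = Tq q hadd (∑ j, x j * (δ * z j ^ q)) + δ * ∑ j, z j ^ (q + 1) := by
      rw [Tq_apply, hsum, ← Finset.sum_add_distrib, ← Finset.sum_add_distrib, Finset.mul_sum,
        Finset.mul_sum, ← Finset.sum_add_distrib]
      refine Finset.sum_congr rfl fun j _ => ?_
      rw [mul_pow, mul_pow, hδq, hinv, pow_succ (x j + z j), hadd]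
      linear_combination δ * CharTwo.add_self_eq_zero (x j ^ (q + 1))
    have s4 : ∑ j, x j * w z j = ∑ j, x j * (c (Fin.castAdd k j) + c (Fin.natAdd k j))
        + ∑ j, x j * (δ * z j ^ q) := by
      rw [← Finset.sum_add_distrib]
      exact Finset.sum_congr rfl fun j _ => by simp only [hwdef]; ring
    rw [s2, s1, s3, s4]
    simp only [hgdef, map_add]
    rw [← sub_eq_zero, ← sub_eq_zero (b := _ + δ * _)]
    simp only [CharTwo.sub_eq_add]
    constructor <;> intro h <;> rw [← h] <;> ring
  rw [Nat.card_congr e] at key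
  exact key

theorem proj_sub {F V : Type} [Field F] [Fintype F] [AddCommGroup V] [Module F V] (q : ℕ)
    (hF : Fintype.card F = q ^ 2) (W : Submodule F V) (m : ℕ) (hm : Module.finrank F W = m) :
    Nat.card ↥{P : Projectivization F V | P.rep ∈ W} = ∑ i ∈ Finset.range m, q ^ (2 * i) := by
  have h1 := Projectivization.card_of_finrank F W hm
  simp only [Nat.card_eq_fintype_card (α := F), hF, ← pow_mul] at h1
  rw [← h1]
  have hinj := Projectivization.map_injective W.subtype W.injective_subtype
  rw [← Set.ncard_univ (Projectivization F ↥W), ← Set.ncard_image_of_injective _ hinj, ← Nat.card_coe_set_eq]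
  congr 2
  ext P
  simp only [Set.mem_ofPred_eq, Set.image_univ, Set.mem_range]
  constructor
  · intro h
    refine ⟨Projectivization.mk F (⟨P.rep, h⟩ : W) (fun h0 => P.rep_nonzero (congrArg Subtype.val h0)), ?_⟩
    rw [Projectivization.map_mk]
    exact P.mk_rep
  · rintro ⟨Q, rfl⟩
    induction Q using Projectivization.ind with
    | h v hv =>
      rw [Projectivization.map_mk]
      obtain ⟨a, ha⟩ := Projectivization.exists_smul_eq_mk_rep F (W.subtype v)
        (fun h0 => hv (W.injective_subtype (h0.trans (map_zero _).symm)))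
      rw [← ha]
      exact W.smul_mem _ v.2

/-- affine point as a vector -/
def affV {F : Type} [Field F] {n : ℕ} (p : (Fin n → F) × F) : Fin (n + 1 + 1) → F :=
  Fin.cons 1 (Fin.snoc p.1 p.2 : Fin (n + 1) → F)

theorem mid_sum {F : Type} [Field F] {n : ℕ} (g : Fin (n + 1 + 1) → F) :
    (∑ i : Fin (n + 1 + 1), if 1 ≤ i.1 ∧ i.1 < n + 1 then g i else 0)
      = ∑ i : Fin n, g i.castSucc.succ := by
  rw [Fin.sum_univ_succ, Fin.sum_univ_castSucc]
  simp

theorem affV_zero {F : Type} [Field F] {n : ℕ} (p : (Fin n → F) × F) : affV p 0 = 1 := rfl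

theorem affV_mid {F : Type} [Field F] {n : ℕ} (p : (Fin n → F) × F) (i : Fin n) :
    affV p i.castSucc.succ = p.1 i := by
  simp [affV]

theorem affV_last {F : Type} [Field F] {n : ℕ} (p : (Fin n → F) × F) :
    affV p (Fin.last (n + 1)) = p.2 := by
  rw [← Fin.succ_last]
  simp [affV]

theorem affEq_affV {F : Type} [Field F] [CharP F 2] (q n : ℕ)
    (hadd : ∀ a b : F, (a + b) ^ q = a ^ q + b ^ q) (α β : F) (p : (Fin n → F) × F) :
    affEq q (n + 1) α β (affV p) ↔
      Tq q hadd (p.2 + α * ∑ i, p.1 i ^ 2) = (β ^ q + β) * ∑ i, p.1 i ^ (q + 1) := by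
  have hsum : ∀ (f : Fin n → F), (∑ j, f j) ^ q = ∑ j, f j ^ q := by
    intro f
    exact map_sum (AddMonoidHom.mk' (fun z : F => z ^ q) hadd) f Finset.univ
  unfold affEq
  rw [mid_sum (fun i => affV p i ^ (2 * q)), mid_sum (fun i => affV p i ^ 2),
    mid_sum (fun i => affV p i ^ (q + 1))]
  simp only [affV_mid, affV_last, CharTwo.sub_eq_add, Tq_apply]
  rw [hadd, mul_pow, hsum]
  simp only [pow_mul]
  constructor <;> intro h <;> rw [← h] <;> ring

/-- the middle coordinate sum -/
def midS (F : Type) [Field F] (n : ℕ) : Module.Dual F (Fin (n + 1 + 1) → F) :=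
  ∑ i : Fin n, LinearMap.proj i.castSucc.succ

theorem midS_apply {F : Type} [Field F] {n : ℕ} (v : Fin (n + 1 + 1) → F) :
    midS F n v = ∑ i : Fin n, v i.castSucc.succ := by
  simp [midS]

/-- the linear space carrying the points at infinity -/
def W0 (F : Type) [Field F] (n : ℕ) : Submodule F (Fin (n + 1 + 1) → F) :=
  LinearMap.ker (LinearMap.proj 0 : Module.Dual F (Fin (n + 1 + 1) → F)) ⊓
    LinearMap.ker (midS F n)

theorem mem_W0 {F : Type} [Field F] {n : ℕ} (v : Fin (n + 1 + 1) → F) :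
    v ∈ W0 F n ↔ v 0 = 0 ∧ ∑ i : Fin n, v i.castSucc.succ = 0 := by
  simp [W0, midS_apply]

theorem split_count {F : Type} [Field F] [Fintype F] [CharP F 2] (q n : ℕ)
    (hadd : ∀ a b : F, (a + b) ^ q = a ^ q + b ^ q) (α β : F)
    (f : Module.Dual F (Fin (n + 1 + 1) → F)) :
    Nat.card ↥(Bset F q (n + 1) α β ∩ {P | f P.rep = 0}) =
      Nat.card {p : (Fin n → F) × F // Tq q hadd (p.2 + α * ∑ i, p.1 i ^ 2)
        = (β ^ q + β) * ∑ i, p.1 i ^ (q + 1) ∧ f (affV p) = 0}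
      + Nat.card ↥{P : Projectivization F (Fin (n + 1 + 1) → F) |
          P.rep ∈ W0 F n ⊓ LinearMap.ker f} := by
  classical
  have hne : ∀ p : (Fin n → F) × F, affV p ≠ 0 := fun p h => by
    have := congrFun h 0
    simp [affV_zero] at this
  let φ : (Fin n → F) × F → Projectivization F (Fin (n + 1 + 1) → F) :=
    fun p => Projectivization.mk F (affV p) (hne p)
  have hφ : Function.Injective φ := by
    intro p p' h
    obtain ⟨a, ha⟩ := (Projectivization.mk_eq_mk_iff' F _ _ _ _).1 h
    have h0 := congrFun ha 0
    simp only [Pi.smul_apply, affV_zero, smul_eq_mul, mul_one] at h0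
    rw [h0, one_smul] at ha
    ext i
    · have := congrFun ha i.castSucc.succ
      rw [affV_mid, affV_mid] at this
      exact this.symm
    · have := congrFun ha (Fin.last (n + 1))
      rw [affV_last, affV_last] at this
      exact this.symm
  set A : Set ((Fin n → F) × F) := {p | Tq q hadd (p.2 + α * ∑ i, p.1 i ^ 2)
        = (β ^ q + β) * ∑ i, p.1 i ^ (q + 1) ∧ f (affV p) = 0} with hA
  set I : Set (Projectivization F (Fin (n + 1 + 1) → F)) :=
    {P | P.rep ∈ W0 F n ⊓ LinearMap.ker f} with hI
  have hset : Bset F q (n + 1) α β ∩ {P | f P.rep = 0} = Set.image φ A ∪ I := by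
    ext P
    simp only [Bset, Set.mem_inter_iff, Set.mem_ofPred_eq, Set.mem_union]
    by_cases h0 : P.rep 0 = 0
    · have h1 : P ∉ Set.image φ A := by
        rintro ⟨p, _, rfl⟩
        obtain ⟨a, ha⟩ := Projectivization.exists_smul_eq_mk_rep F (affV p) (hne p)
        have h2 := congrFun ha 0
        change _ = (φ p).rep 0 at h2
        rw [h0] at h2
        simp [affV_zero, Units.smul_def] at h2
      simp only [h0, h1, hI, ne_eq, not_true_eq_false, false_and, true_and, false_or,
        Set.mem_ofPred_eq, Submodule.mem_inf, LinearMap.mem_ker, mem_W0]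
      rw [mid_sum (fun i => P.rep i ^ 2), ← CharTwo.sum_sq]
      simp
    · have h1 : P ∉ I := by
        simp only [hI, Set.mem_ofPred_eq, Submodule.mem_inf, mem_W0]
        tauto
      simp only [h0, h1, ne_eq, not_false_eq_true, false_and, true_and, or_false]
      let p : (Fin n → F) × F := (fun i => P.rep i.castSucc.succ / P.rep 0,
        P.rep (Fin.last (n + 1)) / P.rep 0)
      have hp : affV p = fun i => P.rep i / P.rep 0 := by
        ext i
        refine Fin.cases ?_ (fun j => ?_) i
        · rw [affV_zero, div_self h0]
        · refine Fin.lastCases ?_ (fun j => ?_) j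
          · rw [Fin.succ_last, affV_last]
          · rw [affV_mid]
      have hp2 : affV p = (P.rep 0)⁻¹ • P.rep := by
        rw [hp]; ext i; simp [div_eq_inv_mul]
      have hφp : φ p = P := by
        conv_rhs => rw [← P.mk_rep]
        exact (Projectivization.mk_eq_mk_iff' F _ _ _ _).2 ⟨_, hp2.symm⟩
      have hmem : P ∈ Set.image φ A ↔ p ∈ A := by
        conv_lhs => rw [← hφp]
        exact hφ.mem_set_image
      rw [hmem, ← hp, affEq_affV q n hadd, hA, Set.mem_ofPred_eq, hp2]
      simp [h0]
  have hdisj : Disjoint (Set.image φ A) I := by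
    rw [Set.disjoint_left]
    rintro _ ⟨p, _, rfl⟩ hP
    obtain ⟨a, ha⟩ := Projectivization.exists_smul_eq_mk_rep F (affV p) (hne p)
    have h2 := congrFun ha 0
    have h0 : (φ p).rep 0 = 0 := ((mem_W0 _).1 hP.1).1
    change _ = (φ p).rep 0 at h2
    rw [h0] at h2
    simp [affV_zero, Units.smul_def] at h2
  rw [hset, Nat.card_coe_set_eq, Set.ncard_union_eq hdisj (Set.toFinite _) (Set.toFinite _),
    Set.ncard_image_of_injective _ hφ]
  rfl

theorem finrank_inf_ker {F V : Type} [Field F] [AddCommGroup V] [Module F V]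
    [FiniteDimensional F V] (U : Submodule F V) (g : Module.Dual F V) (u : V) (hu : u ∈ U)
    (hg : g u ≠ 0) : Module.finrank F ↥(U ⊓ LinearMap.ker g) + 1 = Module.finrank F U := by
  have h1 : g.domRestrict U ≠ 0 := fun h => hg (by
    have := LinearMap.congr_fun h ⟨u, hu⟩
    simpa using this)
  have h2 := Module.Dual.finrank_ker_add_one_of_ne_zero (f := g.domRestrict U) h1
  rw [← h2]
  congr 1
  rw [LinearMap.ker_domRestrict, ← Submodule.map_comap_subtype, Submodule.finrank_map_subtype_eq]

theorem finrank_W0 {F : Type} [Field F] (n : ℕ) (hn : 1 ≤ n) :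
    Module.finrank F (W0 F n) = n := by
  classical
  obtain ⟨m, rfl⟩ : ∃ m, n = m + 1 := ⟨n - 1, by omega⟩
  have h1 := finrank_inf_ker (⊤ : Submodule F (Fin (m + 1 + 1 + 1) → F)) (LinearMap.proj 0)
    (Pi.single 0 1) trivial (by simp)
  have h2 := finrank_inf_ker
    (LinearMap.ker (LinearMap.proj 0 : Module.Dual F (Fin (m + 1 + 1 + 1) → F)))
    (midS F (m + 1)) (Pi.single (Fin.castSucc 0).succ 1) (by simp) (by
      rw [midS_apply, Finset.sum_eq_single 0]
      · simp
      · intro b _ hb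
        rw [Pi.single_apply, if_neg]
        intro h
        exact hb (Fin.castSucc_injective _ (Fin.succ_injective _ h))
      · simp)
  rw [top_inf_eq, finrank_top, Module.finrank_fin_fun] at h1
  unfold W0
  omega

theorem dual_affV {F : Type} [Field F] {n : ℕ} (f : Module.Dual F (Fin (n + 1 + 1) → F))
    (p : (Fin n → F) × F) : f (affV p) = f (Pi.single 0 1)
      + ∑ i, p.1 i * f (Pi.single i.castSucc.succ 1) + p.2 * f (Pi.single (Fin.last (n + 1)) 1) := by
  classical
  rw [LinearMap.pi_apply_eq_sum_univ f (affV p), Fin.sum_univ_succ, Fin.sum_univ_castSucc]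
  have e : ∀ j : Fin (n + 1 + 1), (fun i => if j = i then (1 : F) else 0) = Pi.single j 1 := by
    intro j; ext i; simp [Pi.single_apply, eq_comm]
  simp only [e, affV_zero, affV_mid, Fin.succ_last, affV_last, smul_eq_mul, one_mul]
  ring

theorem strip_count {F : Type} [Field F] [Fintype F] [CharP F 2] (q n : ℕ) (hq : 2 ≤ q)
    (hF : Fintype.card F = q ^ 2)
    (hadd : ∀ a b : F, (a + b) ^ q = a ^ q + b ^ q) (α δ : F) (hδq : δ ^ q = δ)
    (g : (Fin n → F) → Prop) :
    Nat.card {p : (Fin n → F) × F // Tq q hadd (p.2 + α * ∑ i, p.1 i ^ 2)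
        = δ * ∑ i, p.1 i ^ (q + 1) ∧ g p.1} = Nat.card {u : Fin n → F // g u} * q := by
  classical
  have hinv : ∀ a : F, (a ^ q) ^ q = a := by
    intro a
    rw [← pow_mul, ← sq, ← hF, FiniteField.pow_card]
  have hsum : ∀ (f : Fin n → F), (∑ j, f j) ^ q = ∑ j, f j ^ q := by
    intro f
    exact map_sum (AddMonoidHom.mk' (fun z : F => z ^ q) hadd) f Finset.univ
  have e : {p : (Fin n → F) × F // Tq q hadd (p.2 + α * ∑ i, p.1 i ^ 2)
        = δ * ∑ i, p.1 i ^ (q + 1) ∧ g p.1} ≃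
      Σ u : {u : Fin n → F // g u}, {y : F // Tq q hadd y
        = δ * ∑ i, u.1 i ^ (q + 1) - Tq q hadd (α * ∑ i, u.1 i ^ 2)} :=
    { toFun := fun p => ⟨⟨p.1.1, p.2.2⟩, p.1.2, by
        have := p.2.1
        rw [map_add] at this
        exact eq_sub_of_add_eq this⟩
      invFun := fun s => ⟨(s.1.1, s.2.1), by
        have := s.2.2
        simp only [map_add]
        rw [this]; ring, s.1.2⟩
      left_inv := fun _ => rfl
      right_inv := fun _ => rfl }
  rw [Nat.card_congr e, Nat.card_sigma, Finset.sum_congr rfl (g := fun _ => q)]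
  · simp [Nat.card_eq_fintype_card]
  · intro u _
    have := Tq_comp_fiber q hq hF hadd (AddMonoidHom.id F) Function.surjective_id 1
      (by rw [Nat.card_eq_fintype_card, hF]) (δ * ∑ i, u.1 i ^ (q + 1) - Tq q hadd (α * ∑ i, u.1 i ^ 2))
      (by
        rw [CharTwo.sub_eq_add, hadd, mul_pow, hδq, hsum, Tq_apply, hadd, hinv]
        congr 1
        · congr 1
          refine Finset.sum_congr rfl fun j _ => ?_
          rw [pow_succ, mul_pow, hinv, mul_comm]
        · rw [add_comm])
    simpa using this

theorem card_hyper {F : Type} [Field F] [Fintype F] (q n : ℕ) (hq : 2 ≤ q) (hn : 1 ≤ n)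
    (hF : Fintype.card F = q ^ 2) (a : Fin n → F) (ha : a ≠ 0) (a0 : F) :
    Nat.card {u : Fin n → F // a0 + ∑ i, u i * a i = 0} = q ^ (2 * n - 2) := by
  have hs := dotHom_surj a ha
  have h1 := hom_fiber (dotHom a) (-a0) (hs _)
  have hm := (dotHom a).ker.card_mul_index
  rw [AddSubgroup.index_ker, AddMonoidHom.range_eq_top.2 hs, AddSubgroup.card_top,
    Nat.card_eq_fintype_card (α := F), hF, ← h1] at hm
  have hc : Nat.card (Fin n → F) = q ^ (2 * n - 2) * q ^ 2 := by
    rw [← pow_add]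
    simp only [Nat.card_eq_fintype_card, Fintype.card_fun, hF, ← pow_mul, Fintype.card_fin]
    congr 1; omega
  rw [hc] at hm
  rw [← Nat.eq_of_mul_eq_mul_right (by positivity) hm]
  apply Nat.card_congr
  apply Equiv.subtypeEquivRight
  intro u
  rw [dotHom_apply]
  constructor <;> intro h
  · linear_combination h
  · linear_combination h

theorem geo_eq (q m : ℕ) (hq : 2 ≤ q) :
    (q ^ (2 * m) - 1) / (q ^ 2 - 1) = ∑ i ∈ Finset.range m, q ^ (2 * i) := by
  simp only [pow_mul]
  exact (Nat.geomSum_eq (by nlinarith) m).symm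

theorem main_aux {F : Type} [Field F] [Fintype F] [CharP F 2] (q k : ℕ) (hq : 2 ≤ q) (hk : 1 ≤ k)
    (hF : Fintype.card F = q ^ 2)
    (hadd : ∀ a b : F, (a + b) ^ q = a ^ q + b ^ q) (α β : F) (hβ : β ^ q ≠ β) :
    Nat.card ↥(Bset F q (k + k + 1) α β) = q ^ (4 * k + 1) + ∑ i ∈ Finset.range (2 * k), q ^ (2 * i) ∧
    ∀ f : Module.Dual F (Fin (k + k + 1 + 1) → F), f ≠ 0 →
      Nat.card ↥(Bset F q (k + k + 1) α β ∩ {P | f P.rep = 0}) ∈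
        ({∑ i ∈ Finset.range (2 * k), q ^ (2 * i),
          q ^ (4 * k - 1) - q ^ (2 * k - 1) + ∑ i ∈ Finset.range (2 * k - 1), q ^ (2 * i),
          q ^ (4 * k - 1) + ∑ i ∈ Finset.range (2 * k - 1), q ^ (2 * i),
          q ^ (4 * k - 1) + q ^ (2 * k) - q ^ (2 * k - 1)
            + ∑ i ∈ Finset.range (2 * k - 1), q ^ (2 * i),
          q ^ (4 * k - 1) + ∑ i ∈ Finset.range (2 * k), q ^ (2 * i)} : Set ℕ) := by
  classical
  have hinv : ∀ a : F, (a ^ q) ^ q = a := by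
    intro a
    rw [← pow_mul, ← sq, ← hF, FiniteField.pow_card]
  have hδq : (β ^ q + β) ^ q = β ^ q + β := by rw [hadd, hinv, add_comm]
  have hδ : β ^ q + β ≠ 0 := by
    rw [← CharTwo.sub_eq_add, sub_ne_zero]; exact hβ
  have hW := finrank_W0 (F := F) (k + k) (by omega)
  have hinf0 : ∀ f : Module.Dual F (Fin (k + k + 1 + 1) → F), (∀ v ∈ W0 F (k + k), f v = 0) →
      Nat.card ↥{P : Projectivization F (Fin (k + k + 1 + 1) → F) |
          P.rep ∈ W0 F (k + k) ⊓ LinearMap.ker f} = ∑ i ∈ Finset.range (2 * k), q ^ (2 * i) := by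
    intro f hf
    apply proj_sub q hF
    rw [inf_eq_left.2 (fun v hv => hf v hv), hW]; omega
  have hinf1 : ∀ f : Module.Dual F (Fin (k + k + 1 + 1) → F), (∃ v ∈ W0 F (k + k), f v ≠ 0) →
      Nat.card ↥{P : Projectivization F (Fin (k + k + 1 + 1) → F) |
          P.rep ∈ W0 F (k + k) ⊓ LinearMap.ker f}
        = ∑ i ∈ Finset.range (2 * k - 1), q ^ (2 * i) := by
    rintro f ⟨v, hv, hf⟩
    apply proj_sub q hF
    have := finrank_inf_ker _ f v hv hf
    omega
  constructor
  · have h := split_count q (k + k) hadd α β (0 : Module.Dual F (Fin (k + k + 1 + 1) → F))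
    rw [hinf0 0 (by simp)] at h
    have h2 := strip_count q (k + k) hq hF hadd α (β ^ q + β) hδq (fun _ => True)
    simp only [LinearMap.zero_apply] at h
    have e1 : (Bset F q (k + k + 1) α β ∩
        {P : Projectivization F (Fin (k + k + 1 + 1) → F) | True}) = Bset F q (k + k + 1) α β := by
      ext P; simp
    have e2 : Nat.card {u : Fin (k + k) → F // True} = q ^ (4 * k) := by
      rw [Nat.card_congr (Equiv.subtypeUnivEquiv fun _ => trivial)]
      simp only [Nat.card_eq_fintype_card, Fintype.card_fun, hF, ← pow_mul, Fintype.card_fin]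
      congr 1; omega
    rw [e1] at h
    rw [h, pow_succ, ← e2, ← h2]
  · intro f hf
    rw [split_count q (k + k) hadd α β f]
    simp only [dual_affV]
    set a0 := f (Pi.single 0 1) with ha0
    set a : Fin (k + k) → F := fun i => f (Pi.single i.castSucc.succ 1) with ha
    set ar := f (Pi.single (Fin.last (k + k + 1)) 1) with har
    by_cases hr : ar = 0
    · simp only [hr, mul_zero, add_zero]
      rw [strip_count q (k + k) hq hF hadd α (β ^ q + β) hδq
        (fun u => a0 + ∑ i, u i * a i = 0)]
      by_cases haz : a = 0
      · have ha00 : a0 ≠ 0 := by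
          intro h
          apply hf
          apply LinearMap.pi_ext'
          intro i
          apply LinearMap.ext_ring
          simp only [LinearMap.comp_apply, LinearMap.zero_apply, LinearMap.single_apply]
          refine Fin.cases ?_ (fun j => ?_) i
          · exact h
          · refine Fin.lastCases ?_ (fun j => ?_) j
            · rw [Fin.succ_last]; exact hr
            · exact congrFun haz j
        have e1 : Nat.card {u : Fin (k + k) → F // a0 + ∑ i, u i * a i = 0} = 0 := by
          rw [Nat.card_eq_zero]
          left
          refine ⟨fun u => ha00 ?_⟩
          have := u.2
          simpa [haz] using this
        rw [e1, hinf0 f]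
        · simp
        · intro v hv
          rw [mem_W0] at hv
          rw [LinearMap.pi_apply_eq_sum_univ f v, Fin.sum_univ_succ, Fin.sum_univ_castSucc]
          have e : ∀ j : Fin (k + k + 1 + 1),
              (fun i => if j = i then (1 : F) else 0) = Pi.single j 1 := by
            intro j; ext i; simp [Pi.single_apply, eq_comm]
          simp only [e]
          have h3 : ∀ j : Fin (k + k), f (Pi.single j.castSucc.succ 1) = 0 := fun j =>
            congrFun haz j
          rw [Fin.succ_last, ← har, hr, hv.1]
          simp [h3]
      · rw [card_hyper q (k + k) hq (by omega) hF a haz a0]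
        have e1 : q ^ (2 * (k + k) - 2) * q = q ^ (4 * k - 1) := by
          rw [← pow_succ]; congr 1; omega
        rw [e1]
        by_cases hw : ∃ v ∈ W0 F (k + k), f v ≠ 0
        · rw [hinf1 f hw]; simp
        · push Not at hw
          rw [hinf0 f hw]; simp
    · have hw : ∃ v ∈ W0 F (k + k), f v ≠ 0 := by
        refine ⟨Pi.single (Fin.last (k + k + 1)) 1, ?_, hr⟩
        rw [mem_W0]
        constructor
        · rw [Pi.single_apply, if_neg]
          exact (Fin.last_pos).ne
        · apply Finset.sum_eq_zero
          intro i _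
          rw [Pi.single_apply, if_neg]
          rw [← Fin.succ_last]
          intro h
          exact (Fin.castSucc_lt_last i).ne (Fin.succ_injective _ h)
      rw [hinf1 f hw]
      have e : {p : (Fin (k + k) → F) × F // Tq q hadd (p.2 + α * ∑ i, p.1 i ^ 2)
          = (β ^ q + β) * ∑ i, p.1 i ^ (q + 1) ∧ a0 + ∑ i, p.1 i * a i + p.2 * ar = 0} ≃
          {u : Fin (k + k) → F // Tq q hadd (-a0 / ar + ∑ i, (-a i / ar) * u i + α * ∑ i, u i ^ 2)
            = (β ^ q + β) * ∑ i, u i ^ (q + 1)} := by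
        have hsol : ∀ (u : Fin (k + k) → F) (y : F), a0 + ∑ i, u i * a i + y * ar = 0 ↔
            y = -a0 / ar + ∑ i, (-a i / ar) * u i := by
          intro u y
          have : -a0 / ar + ∑ i, (-a i / ar) * u i = (-a0 - ∑ i, u i * a i) / ar := by
            rw [sub_div, Finset.sum_div, sub_eq_add_neg, ← Finset.sum_neg_distrib]
            congr 1
            exact Finset.sum_congr rfl fun i _ => by ring
          rw [this, eq_div_iff hr]
          constructor <;> intro h <;> linear_combination h
        exact
        { toFun := fun p => ⟨p.1.1, by
            rw [← (hsol _ _).1 p.2.2]; exact p.2.1⟩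
          invFun := fun u => ⟨(u.1, -a0 / ar + ∑ i, (-a i / ar) * u.1 i), u.2, (hsol _ _).2 rfl⟩
          left_inv := fun p => by
            apply Subtype.ext
            apply Prod.ext
            · rfl
            · exact ((hsol _ _).1 p.2.2).symm
          right_inv := fun _ => rfl }
      rw [Nat.card_congr e]
      rcases quad_count q hq hF hadd k hk α (β ^ q + β) (-a0 / ar) hδ hδq (fun i => -a i / ar)
        with h | h
      · rw [h]; simp
      · rw [h]; simp

/-- size and hyperplane intersection numbers of `B` for `q > 2` even
and `r ≥ 3` odd. -/
theorem statement4 (q r : ℕ) (hq : IsPrimePow q) (hqeven : Even q) (hq2 : 2 < q)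
    (hr : 3 ≤ r) (hrodd : Odd r)
    (F : Type) [Field F] [Fintype F] (hF : Fintype.card F = q ^ 2)
    (α β : F) (hα : α ≠ 0) (hβ : β ^ q ≠ β) :
    Nat.card ↥(Bset F q r α β) = q ^ (2 * r - 1) + ∑ i ∈ Finset.range (r - 1), q ^ (2 * i) ∧
    ∀ f : Module.Dual F (Fin (r + 1) → F), f ≠ 0 →
      Nat.card ↥(Bset F q r α β ∩ {P | f P.rep = 0}) ∈
        ({(q ^ (2 * (r - 1)) - 1) / (q ^ 2 - 1),
          q ^ (2 * r - 3) - q ^ (r - 2) + (q ^ (2 * (r - 2)) - 1) / (q ^ 2 - 1),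
          q ^ (2 * r - 3) + (q ^ (2 * (r - 2)) - 1) / (q ^ 2 - 1),
          q ^ (2 * r - 3) + q ^ (r - 1) - q ^ (r - 2) + (q ^ (2 * (r - 2)) - 1) / (q ^ 2 - 1),
          q ^ (2 * r - 3) + (q ^ (2 * (r - 1)) - 1) / (q ^ 2 - 1)} : Set ℕ) := by
  obtain ⟨k, rfl⟩ := hrodd
  obtain ⟨p, e, hp, he, rfl⟩ := hq
  have hp2 : p = 2 := by
    have h2 : 2 ∣ p := Nat.prime_two.dvd_of_dvd_pow hqeven.two_dvd
    exact ((Nat.prime_dvd_prime_iff_eq Nat.prime_two hp.nat_prime).1 h2).symm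
  subst hp2
  have : Fact (Nat.Prime 2) := ⟨Nat.prime_two⟩
  have : CharP F 2 := charP_of_card_eq_prime_pow (f := e * 2) (by rw [hF, pow_mul])
  have hadd : ∀ a b : F, (a + b) ^ (2 ^ e) = a ^ (2 ^ e) + b ^ (2 ^ e) :=
    fun a b => add_pow_char_pow a b 2 e
  have key := main_aux (2 ^ e) k (by omega) (by omega) hF hadd α β hβ
  rw [geo_eq _ _ (by omega), geo_eq _ _ (by omega)]
  have hk : k + k = 2 * k := by omega
  rw [hk] at key
  have e1 : 2 * (2 * k + 1) - 1 = 4 * k + 1 := by omega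
  have e2 : 2 * k + 1 - 1 = 2 * k := by omega
  have e3 : 2 * (2 * k + 1) - 3 = 4 * k - 1 := by omega
  have e4 : 2 * k + 1 - 2 = 2 * k - 1 := by omega
  rw [e1, e2, e3, e4]
  exact key
end
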